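/- Let L1 and L2 be propositional bimodal logics with operators □_1, □_E and □_2, □_E respectively, each containing the S5 axioms for the shared operator □_E. If L1 and L2 admit E-homogeneous models, then L1 ⊗_E L2 is Kripke complete, and if moreover L1 and L2 are decidable then L1 ⊗_E L2 is decidable. If L1 and L2 admit E-homogeneous models for global consequence, then L1 ⊗_E L2 is globally Kripke complete, and if moreover L1 and L2 are globally decidable then L1 ⊗_E L2 is globally decidable. -/

import Mathlib

namespace PropML

/-- propositional modal formulas over modal signature `M` -/
inductive PF (M : Type) : Type
  | atom : ℕ → PF M
  | neg : PF M → PF M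
  | and : PF M → PF M → PF M
  | box : M → PF M → PF M
  deriving DecidableEq

namespace PF

variable {M M' : Type}

def imp (φ ψ : PF M) : PF M := .neg (.and φ (.neg ψ))

def or (φ ψ : PF M) : PF M := .neg (.and (.neg φ) (.neg ψ))

def dia (m : M) (φ : PF M) : PF M := .neg (.box m (.neg φ))

/-- `⊥` -/
def bot : PF M := .and (.atom 0) (.neg (.atom 0))

/-- renaming of modal operators -/
def mapOp (f : M → M') : PF M → PF M'
  | atom n => atom n
  | neg φ => neg (mapOp f φ)
  | and φ ψ => and (mapOp f φ) (mapOp f ψ)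
  | box m φ => box (f m) (mapOp f φ)

/-- uniform substitution -/
def substP (σ : ℕ → PF M) : PF M → PF M
  | atom n => σ n
  | neg φ => neg (substP σ φ)
  | and φ ψ => and (substP σ φ) (substP σ ψ)
  | box m φ => box m (substP σ φ)

end PF

/-- evaluation treating atoms and boxed formulas as atomic; used to define
the classical tautologies of the modal language -/
def tautEval {M : Type} (v : PF M → Prop) : PF M → Prop
  | .atom n => v (.atom n)
  | .neg φ => ¬ tautEval v φ
  | .and φ ψ => tautEval v φ ∧ tautEval v ψ
  | .box m φ => v (.box m φ)

/-- classical tautologies of the propositional modal language -/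
def IsTaut {M : Type} (φ : PF M) : Prop := ∀ v, tautEval v φ

/-- a (normal) propositional modal `M`-logic -/
structure IsPLogic {M : Type} (L : Set (PF M)) : Prop where
  taut : ∀ φ, IsTaut φ → φ ∈ L
  kax : ∀ (m : M) (n k : ℕ),
    PF.imp (.box m (PF.imp (.atom n) (.atom k)))
      (PF.imp (.box m (.atom n)) (.box m (.atom k))) ∈ L
  mp : ∀ φ ψ, PF.imp φ ψ ∈ L → φ ∈ L → ψ ∈ L
  nec : ∀ m φ, φ ∈ L → PF.box m φ ∈ L
  subst : ∀ (σ : ℕ → PF M) φ, φ ∈ L → PF.substP σ φ ∈ L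

/-- A Kripke `M`-frame. -/
structure KFrame (M : Type) where
  W : Type
  ne : Nonempty W
  R : M → W → W → Prop

/-- truth of a propositional formula in a Kripke model `(F, V)` -/
def PVal {M : Type} {F : KFrame M} (V : ℕ → F.W → Prop) : PF M → F.W → Prop
  | .atom n, w => V n w
  | .neg φ, w => ¬ PVal V φ w
  | .and φ ψ, w => PVal V φ w ∧ PVal V ψ w
  | .box m φ, w => ∀ v, F.R m w v → PVal V φ v

/-- validity of a propositional formula on a frame -/
def PValid {M : Type} (F : KFrame M) (φ : PF M) : Prop :=
  ∀ (V : ℕ → F.W → Prop) (w : F.W), PVal (F := F) V φ w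

/-- `F` is a frame for the logic `L` -/
def FrameFor {M : Type} (F : KFrame M) (L : Set (PF M)) : Prop :=
  ∀ φ ∈ L, PValid F φ

/-- `L` is Kripke complete -/
def KComplete {M : Type} (L : Set (PF M)) : Prop :=
  ∀ φ, (∀ F : KFrame M, FrameFor F L → PValid F φ) → φ ∈ L

/-- global consequence `φ ⊢*_L ψ`: `ψ` is in the smallest set including
`L ∪ {φ}` closed under Modus Ponens and Necessitation -/
inductive PGlobal {M : Type} (L : Set (PF M)) (φ : PF M) : PF M → Prop
  | ax {ψ} : ψ ∈ L → PGlobal L φ ψ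
  | prem : PGlobal L φ φ
  | mp {ψ χ} : PGlobal L φ (PF.imp ψ χ) → PGlobal L φ ψ → PGlobal L φ χ
  | nec (m : M) {ψ} : PGlobal L φ ψ → PGlobal L φ (PF.box m ψ)

/-- `L` is globally Kripke complete -/
def GloballyKComplete {M : Type} (L : Set (PF M)) : Prop :=
  ∀ φ ψ, PGlobal L φ ψ ↔
    ∀ F : KFrame M, FrameFor F L → ∀ V : ℕ → F.W → Prop,
      (∀ w, PVal (F := F) V φ w) → ∀ w, PVal (F := F) V ψ w

/-- the S5 axioms for the operator `e` -/
def ContainsS5 {M : Type} (L : Set (PF M)) (e : M) : Prop :=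
  PF.imp (.box e (.atom 0)) (.atom 0) ∈ L ∧
  PF.imp (.box e (.atom 0)) (.box e (.box e (.atom 0))) ∈ L ∧
  PF.imp (PF.dia e (.atom 0)) (.box e (PF.dia e (.atom 0))) ∈ L

/-- an `(E, κ)`-homogeneous model: in each `E`-equivalence class, each formula
is satisfied either nowhere or at exactly `κ` worlds -/
def EHomog {M : Type} {F : KFrame M} (e : M) (V : ℕ → F.W → Prop)
    (κ : Cardinal) : Prop :=
  ∀ (w : F.W) (φ : PF M),
    Cardinal.mk {v : F.W // F.R e w v ∧ PVal (F := F) V φ v} = 0 ∨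
    Cardinal.mk {v : F.W // F.R e w v ∧ PVal (F := F) V φ v} = κ

/-- `L` admits `E`-homogeneous models -/
def AdmitsEHomog {M : Type} (e : M) (L : Set (PF M)) : Prop :=
  ∃ κ : Cardinal, Cardinal.aleph0 ≤ κ ∧ ∀ κ', κ ≤ κ' → ∀ φ ∉ L,
    ∃ F : KFrame M, FrameFor F L ∧ ∃ V : ℕ → F.W → Prop,
      EHomog e V κ' ∧ ∃ w, ¬ PVal (F := F) V φ w

/-- `L` admits `E`-homogeneous models for global consequence -/
def AdmitsEHomogGlobal {M : Type} (e : M) (L : Set (PF M)) : Prop :=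
  ∃ κ : Cardinal, Cardinal.aleph0 ≤ κ ∧ ∀ κ', κ ≤ κ' → ∀ φ ψ, ¬ PGlobal L φ ψ →
    ∃ F : KFrame M, FrameFor F L ∧ ∃ V : ℕ → F.W → Prop,
      EHomog e V κ' ∧ (∀ w, PVal (F := F) V φ w) ∧ ∃ w, ¬ PVal (F := F) V ψ w

/-- the fusion `L1 ⊗_E L2` of two logics sharing the S5 operator `□_E`
(designated by `none` in each component signature): the smallest propositional
modal logic in the combined language (with the single shared `□_E`) including
`L1 ∪ L2` -/
def fusionE {M1 M2 : Type} (L1 : Set (PF (Option M1))) (L2 : Set (PF (Option M2))) :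
    Set (PF (Option (M1 ⊕ M2))) :=
  ⋂₀ {L | IsPLogic L ∧
    PF.mapOp (Option.map Sum.inl) '' L1 ⊆ L ∧
    PF.mapOp (Option.map Sum.inr) '' L2 ⊆ L}

/-- the propositional modal logic `S5` (of the single operator `□_E`) -/
def S5L : Set (PF Unit) := ⋂₀ {L | IsPLogic L ∧ ContainsS5 L ()}

/-- the left commutativity axiom `□□_E p → □_E □ p` -/
def lcom {M : Type} (m : M) : PF (Option M) :=
  PF.imp (.box (some m) (.box none (.atom 0))) (.box none (.box (some m) (.atom 0)))

/-- the right commutativity axiom `□_E □ p → □ □_E p` -/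
def rcom {M : Type} (m : M) : PF (Option M) :=
  PF.imp (.box none (.box (some m) (.atom 0))) (.box (some m) (.box none (.atom 0)))

/-- the semicommutator `[L, S5]^xd = L ⊗ S5 + {lcom_□ : □ ∈ M}`
(`□_E` is `none`) -/
def LS5xd {M : Type} (L : Set (PF M)) : Set (PF (Option M)) :=
  ⋂₀ {L' | IsPLogic L' ∧
    PF.mapOp Option.some '' L ⊆ L' ∧
    PF.mapOp (fun _ => (none : Option M)) '' S5L ⊆ L' ∧
    ∀ m : M, lcom m ∈ L'}

/-- the commutator `[L, S5]^cd = [L, S5]^xd + {rcom_□ : □ ∈ M}` -/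
def LS5cd {M : Type} (L : Set (PF M)) : Set (PF (Option M)) :=
  ⋂₀ {L' | IsPLogic L' ∧ LS5xd L ⊆ L' ∧ ∀ m : M, rcom m ∈ L'}

/-- the two domain semantics: expanding (`xd`) and constant (`cd`) domains -/
inductive DSem : Type
  | xd | cd
  deriving DecidableEq

/-- `[L, S5]^d` -/
def LS5 {M : Type} (d : DSem) (L : Set (PF M)) : Set (PF (Option M)) :=
  match d with
  | .xd => LS5xd L
  | .cd => LS5cd L

/-- the fixed Gödel numbering of propositional formulas (relative to a
numbering `eM` of the modal operators) -/
def PF.encode {M : Type} (eM : M → ℕ) : PF M → ℕ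
  | .atom n => Nat.pair 0 n
  | .neg φ => Nat.pair 1 (PF.encode eM φ)
  | .and φ ψ => Nat.pair 2 (Nat.pair (PF.encode eM φ) (PF.encode eM ψ))
  | .box m φ => Nat.pair 3 (Nat.pair (eM m) (PF.encode eM φ))

/-- decidability of a propositional logic w.r.t. the fixed Gödel numbering -/
def DecidableP {M : Type} (eM : M → ℕ) (L : Set (PF M)) : Prop :=
  ComputablePred (fun n : ℕ => ∃ φ ∈ L, PF.encode eM φ = n)

/-- decidability of the global consequence relation -/
def GloballyDecidableP {M : Type} (eM : M → ℕ) (L : Set (PF M)) : Prop :=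
  ComputablePred (fun p : ℕ × ℕ =>
    ∃ φ ψ, PGlobal L φ ψ ∧ PF.encode eM φ = p.1 ∧ PF.encode eM ψ = p.2)

end PropML

namespace PropML

/-- numbering of the component signature `Option Unit` (`none` is `□_E`) -/
def eOU : Option Unit → ℕ := fun o => match o with | none => 0 | some _ => 1

/-- numbering of the combined signature `Option (Unit ⊕ Unit)` -/
def eOC : Option (Unit ⊕ Unit) → ℕ := fun o =>
  match o with | none => 0 | some (Sum.inl _) => 1 | some (Sum.inr _) => 2

/-!
A model of the fusion is traded for *surrogate* models of the two components, in which the atom `a`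
stands for the formula with code `a`: it obeys the truth clause of that formula whenever its main
operator belongs to the component, and is unconstrained otherwise. Truth clauses are required only
below the level of a world, which may drop by one along each operator but is constant on
`E`-classes, so a single formula of the component, the guard, enforces them.

Colour each world by its level and the atoms true below it. In an `E`-homogeneous model an `E`-class
is determined, up to a colour-preserving bijection, by its palette, the set of colours it contains.
Hence, if two surrogate models realise the same palettes, products of both with a large set can be
identified along `E`-classes, and the resulting frame of the fusion is a model in which the atoms
agree with the formulas they stand for.

Palettes of a given level are finite in number, so a set of palettes realisable in both components
can be coded by a number `D`. The palettes consistent with the fusion form such a set, which gives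
completeness; a bounded search for `D` that consults the two component logics gives decidability.
-/

section Semantics

variable {M M' : Type} {F G : KFrame M} {L : Set (PF M)}

theorem PVal_imp {V : ℕ → F.W → Prop} {φ ψ : PF M} {w : F.W} :
    PVal V (PF.imp φ ψ) w ↔ (PVal V φ w → PVal V ψ w) := by
  simp only [PF.imp, PVal, not_and, not_not]

theorem PVal_dia {V : ℕ → F.W → Prop} {m : M} {φ : PF M} {w : F.W} :
    PVal V (PF.dia m φ) w ↔ ∃ v, F.R m w v ∧ PVal V φ v := by
  simp only [PF.dia, PVal, not_forall, not_not, exists_prop]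

theorem tautEval_PVal (V : ℕ → F.W → Prop) (w : F.W) (φ : PF M) :
    tautEval (fun ψ => PVal V ψ w) φ ↔ PVal V φ w := by
  induction φ with
  | atom n => rfl
  | neg φ ih => exact not_congr ih
  | and φ ψ ihφ ihψ => exact and_congr ihφ ihψ
  | box m φ _ => rfl

theorem PVal_substP (V : ℕ → F.W → Prop) (σ : ℕ → PF M) (φ : PF M) (w : F.W) :
    PVal V (PF.substP σ φ) w ↔ PVal (fun n => PVal V (σ n)) φ w := by
  induction φ generalizing w with
  | atom n => rfl
  | neg φ ih => exact not_congr (ih w)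
  | and φ ψ ihφ ihψ => exact and_congr (ihφ w) (ihψ w)
  | box m φ ih => exact forall₂_congr fun v _ => ih v

theorem isPLogic_setOf_PValid (F : KFrame M) : IsPLogic {φ | PValid F φ} where
  taut _ hφ V w := (tautEval_PVal V w _).1 (hφ _)
  kax _ _ _ _ _ := by
    simp only [PVal_imp, PVal]
    exact fun himp hn v hv => himp v hv (hn v hv)
  mp _ _ himp hφ V w := PVal_imp.1 (himp V w) (hφ V w)
  nec _ _ hφ V _ v _ := hφ V v
  subst σ φ hφ V w := (PVal_substP V σ φ w).2 (hφ _ w)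

theorem PGlobal.sound {φ ψ : PF M} (h : PGlobal L φ ψ) (hF : FrameFor F L)
    {V : ℕ → F.W → Prop} (hφ : ∀ w, PVal V φ w) (w : F.W) : PVal V ψ w := by
  induction h generalizing w with
  | ax h => exact hF _ h V w
  | prem => exact hφ w
  | mp _ _ ih₁ ih₂ => exact PVal_imp.1 (ih₁ w) (ih₂ w)
  | nec m _ ih => exact fun v _ => ih v

theorem FrameFor.equivalence {e : M} (hF : FrameFor F L) (hS : ContainsS5 L e) :
    Equivalence (F.R e) := by
  obtain ⟨hT, h4, h5⟩ := hS
  have refl (x : F.W) : F.R e x x := by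
    have := hF _ hT (fun _ y => F.R e x y) x
    simp only [PVal_imp, PVal] at this
    exact this fun _ h => h
  refine ⟨refl, fun {x y} hxy => ?_, fun {x y z} hxy hyz => ?_⟩
  · have := hF _ h5 (fun _ z => z = x) x
    simp only [PVal_imp, PVal_dia, PVal] at this
    obtain ⟨v, hyv, rfl⟩ := this ⟨x, refl x, rfl⟩ y hxy
    exact hyv
  · have := hF _ h4 (fun _ y => F.R e x y) x
    simp only [PVal_imp, PVal] at this
    exact this (fun _ h => h) y hxy z hyz

/-- The `M`-frame obtained from an `M'`-frame by interpreting `m` as `f m`. -/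
def KFrame.reduct (f : M → M') (F : KFrame M') : KFrame M :=
  ⟨F.W, F.ne, fun m => F.R (f m)⟩

theorem PVal_mapOp {F : KFrame M'} (f : M → M') (V : ℕ → F.W → Prop) (φ : PF M) (w : F.W) :
    PVal V (PF.mapOp f φ) w ↔ PVal (F := F.reduct f) V φ w := by
  induction φ generalizing w with
  | atom n => rfl
  | neg φ ih => exact not_congr (ih w)
  | and φ ψ ihφ ihψ => exact and_congr (ihφ w) (ihψ w)
  | box m φ ih => exact forall₂_congr fun v _ => ih v

theorem FrameFor.fusionE {M1 M2 : Type} {L1 : Set (PF (Option M1))} {L2 : Set (PF (Option M2))}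
    {F : KFrame (Option (M1 ⊕ M2))} (h1 : FrameFor (F.reduct (Option.map Sum.inl)) L1)
    (h2 : FrameFor (F.reduct (Option.map Sum.inr)) L2) : FrameFor F (fusionE L1 L2) := by
  have hF : PropML.fusionE L1 L2 ⊆ {φ | PValid F φ} := by
    refine Set.sInter_subset_of_mem ⟨isPLogic_setOf_PValid F, ?_, ?_⟩ <;> rintro _ ⟨φ, hφ, rfl⟩ V w
    · exact (PVal_mapOp _ V φ w).2 (h1 φ hφ V w)
    · exact (PVal_mapOp _ V φ w).2 (h2 φ hφ V w)
  exact hF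

/-- Bounded (p-)morphisms of frames; the forth and back conditions are merged into one
equivalence. -/
def IsBoundedMorphism (F G : KFrame M) (f : F.W → G.W) : Prop :=
  ∀ m x y', G.R m (f x) y' ↔ ∃ y, F.R m x y ∧ f y = y'

namespace IsBoundedMorphism

variable {f : F.W → G.W}

theorem forall_rel_iff (hf : IsBoundedMorphism F G f) {m : M} {x : F.W} {P : G.W → Prop} :
    (∀ y', G.R m (f x) y' → P y') ↔ ∀ y, F.R m x y → P (f y) := by
  refine ⟨fun h y hy => h _ ((hf m x _).2 ⟨y, hy, rfl⟩), fun h y' hy' => ?_⟩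
  obtain ⟨y, hy, rfl⟩ := (hf m x y').1 hy'
  exact h y hy

theorem PVal_iff (hf : IsBoundedMorphism F G f) (V : ℕ → G.W → Prop) (φ : PF M) (x : F.W) :
    PVal V φ (f x) ↔ PVal (F := F) (fun n x => V n (f x)) φ x := by
  induction φ generalizing x with
  | atom n => rfl
  | neg φ ih => exact not_congr (ih x)
  | and φ ψ ihφ ihψ => exact and_congr (ihφ x) (ihψ x)
  | box m φ ih => exact hf.forall_rel_iff.trans (forall₂_congr fun y _ => ih y)

end IsBoundedMorphism

theorem frameFor_of_boundedMorphisms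
    (h : ∀ y : G.W, ∃ (F : KFrame M) (f : F.W → G.W),
      FrameFor F L ∧ IsBoundedMorphism F G f ∧ y ∈ Set.range f) :
    FrameFor G L := by
  intro φ hφ V y
  obtain ⟨F, f, hF, hf, x, rfl⟩ := h y
  exact (hf.PVal_iff V φ x).2 (hF φ hφ _ x)

/-- The disjoint union of a nonempty family of frames. -/
def KFrame.sigma {J : Type} [Nonempty J] (F : J → KFrame M) : KFrame M where
  W := Σ j, (F j).W
  ne := ⟨⟨Classical.arbitrary J, (F _).ne.some⟩⟩
  R m z z' := ∃ y, (F z.1).R m z.2 y ∧ ⟨z.1, y⟩ = z'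

theorem isBoundedMorphism_sigma_mk {J : Type} [Nonempty J] (F : J → KFrame M) (j : J) :
    IsBoundedMorphism (F j) (KFrame.sigma F) (fun x => ⟨j, x⟩) :=
  fun _ _ _ => Iff.rfl

theorem FrameFor.sigma {J : Type} [Nonempty J] {F : J → KFrame M} (hF : ∀ j, FrameFor (F j) L) :
    FrameFor (KFrame.sigma F) L :=
  frameFor_of_boundedMorphisms fun ⟨j, x⟩ =>
    ⟨F j, fun x => ⟨j, x⟩, hF j, isBoundedMorphism_sigma_mk F j, x, rfl⟩

end Semantics

section Gluing

open Cardinal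

universe u

variable {X Y P I : Type u}

theorem exists_equiv_of_mk_fiber_eq {f : X → P} {g : Y → P}
    (h : ∀ c, #{x // f x = c} = #{y // g y = c}) : ∃ e : X ≃ Y, ∀ x, g (e x) = f x := by
  have e (c) : {x // f x = c} ≃ {y // g y = c} := (Cardinal.eq.1 (h c)).some
  exact ⟨Equiv.ofFiberEquiv e, fun x => Equiv.ofFiberEquiv_map _ x⟩

theorem mk_fiber_prod [Infinite I] {f : X → P} {c : P} (hX : #X ≤ #I) (hc : c ∈ Set.range f) :
    #{z : X × I // f z.1 = c} = #I := by
  obtain ⟨x, rfl⟩ := hc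
  have hinj : Function.Injective fun i => (⟨(x, i), rfl⟩ : {z : X × I // f z.1 = f x}) :=
    fun i j hij => congrArg (fun z => z.1.2) hij
  refine le_antisymm ?_ (mk_le_of_injective hinj)
  calc #{z : X × I // f z.1 = f x} ≤ #(X × I) := mk_subtype_le _
    _ = #X * #I := by simp only [mk_prod, lift_id]
    _ ≤ #I := mul_le_of_le (aleph0_le_mk I) hX le_rfl

theorem exists_equiv_prod_of_range_eq [Infinite I] {f : X → P} {g : Y → P} (hX : #X ≤ #I)
    (hY : #Y ≤ #I) (hfg : Set.range f = Set.range g) :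
    ∃ e : X × I ≃ Y × I, ∀ z, g (e z).1 = f z.1 := by
  refine exists_equiv_of_mk_fiber_eq (f := fun z : X × I => f z.1) (g := fun z : Y × I => g z.1)
    fun c => ?_
  by_cases hc : c ∈ Set.range f
  · rw [mk_fiber_prod hX hc, mk_fiber_prod hY (hfg ▸ hc)]
  · have hc' : c ∉ Set.range g := hfg ▸ hc
    rw [mk_eq_zero_iff.2 ⟨fun z => hc ⟨_, z.2⟩⟩, mk_eq_zero_iff.2 ⟨fun z => hc' ⟨_, z.2⟩⟩]

/-- The set of colours, under the colouring `p`, of the points `R`-related to `x`. -/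
def palette (R : X → X → Prop) (p : X → P) (x : X) : Set P := p '' {x' | R x x'}

theorem palette_eq_of_rel {R : X → X → Prop} (hR : Equivalence R) (p : X → P) {x y : X}
    (hxy : R x y) : palette R p x = palette R p y := by
  have : {x' | R x x'} = {x' | R y x'} :=
    Set.ext fun _ => ⟨hR.trans (hR.symm hxy), hR.trans hxy⟩
  rw [palette, palette, this]

/-- Every colour that `p` takes at a point `R`-related to `x` is taken at exactly `κ` of them. -/
def IsHomogeneous (R : X → X → Prop) (p : X → P) (κ : Cardinal.{u}) : Prop :=
  ∀ x c, #{x' // R x x' ∧ p x' = c} = 0 ∨ #{x' // R x x' ∧ p x' = c} = κ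

theorem IsHomogeneous.mk_eq_ite {R : X → X → Prop} {p : X → P} {κ : Cardinal.{u}}
    (hp : IsHomogeneous R p κ) (x : X) (c : P) [Decidable (c ∈ palette R p x)] :
    #{x' // R x x' ∧ p x' = c} = if c ∈ palette R p x then κ else 0 := by
  split_ifs with hc
  · obtain ⟨x', hx'⟩ := hc
    exact (hp x c).resolve_left (mk_ne_zero_iff.2 ⟨⟨x', hx'⟩⟩)
  · exact mk_eq_zero_iff.2 ⟨fun x' => hc ⟨x', x'.2⟩⟩

theorem mk_fiber_quotient_prod {T : Type u} {r : Setoid X} {h : Quotient r × I → T}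
    (hh : h.Injective) (p : X → P) (x : X) (i : I) (c : P) :
    #{z : X × I // (h (⟦z.1⟧, z.2), p z.1) = (h (⟦x⟧, i), c)} = #{x' // r x x' ∧ p x' = c} := by
  have fiber_iff (z : X × I) :
      (h (⟦z.1⟧, z.2), p z.1) = (h (⟦x⟧, i), c) ↔ (r x z.1 ∧ p z.1 = c) ∧ z.2 = i := by
    simp only [Prod.mk.injEq, hh.eq_iff, Quotient.eq, r.comm' (x := z.1)]
    tauto
  refine Cardinal.mk_congr ⟨fun z => ⟨z.1.1, ((fiber_iff _).1 z.2).1⟩,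
    fun x' => ⟨(x', i), (fiber_iff _).2 ⟨x'.2, rfl⟩⟩, fun z => ?_, fun x' => rfl⟩
  exact Subtype.ext (Prod.ext rfl ((fiber_iff _).1 z.2).2.symm)

/-- Both sides are multiplied by a set large enough to equalise the numbers of classes with a
given palette; classes with the same palette are matched by homogeneity. -/
theorem exists_equiv_prod_of_palettes_eq {rX : Setoid X} {rY : Setoid Y} {p : X → P} {q : Y → P}
    {κ : Cardinal.{u}} (hp : IsHomogeneous rX p κ) (hq : IsHomogeneous rY q κ)
    (hpq : Set.range (palette rX p) = Set.range (palette rY q)) :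
    ∃ (I : Type u) (_ : Nonempty I) (e : X × I ≃ Y × I), (∀ z, q (e z).1 = p z.1) ∧
      ∀ z z', rY (e z).1 (e z').1 ∧ (e z).2 = (e z').2 ↔ rX z.1 z'.1 ∧ z.2 = z'.2 := by
  classical
  let I := ℕ ⊕ X ⊕ Y
  have hX : #X ≤ #I := mk_le_of_injective (Sum.inr_injective.comp Sum.inl_injective)
  have hY : #Y ≤ #I := mk_le_of_injective (Sum.inr_injective.comp Sum.inr_injective)
  let palX : Quotient rX → Set P :=
    Quotient.lift (palette rX p) fun _ _ => palette_eq_of_rel rX.iseqv p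
  let palY : Quotient rY → Set P :=
    Quotient.lift (palette rY q) fun _ _ => palette_eq_of_rel rY.iseqv q
  obtain ⟨g, hg⟩ : ∃ g : Quotient rX × I ≃ Quotient rY × I, ∀ z, palY (g z).1 = palX z.1 :=
    exists_equiv_prod_of_range_eq (mk_quotient_le.trans hX) (mk_quotient_le.trans hY)
      (by simpa only [palX, palY, Set.range_quotient_lift] using hpq)
  let fX : X × I → (Quotient rY × I) × P := fun z => (g (⟦z.1⟧, z.2), p z.1)
  let fY : Y × I → (Quotient rY × I) × P := fun z => ((⟦z.1⟧, z.2), q z.1)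
  have mk_fiber (d) : #{z // fX z = d} = #{z // fY z = d} := by
    obtain ⟨d, c⟩ := d
    obtain ⟨⟨⟨x⟩, i⟩, rfl⟩ := g.surjective d
    obtain ⟨y, j, hy⟩ : ∃ y j, g (⟦x⟧, i) = (⟦y⟧, j) :=
      let ⟨y, hy⟩ := Quotient.exists_rep (g (⟦x⟧, i)).1
      ⟨y, _, Prod.ext hy.symm rfl⟩
    have hxy : palette rY q y = palette rX p x := by
      have := hg (⟦x⟧, i)
      rwa [hy] at this
    calc #{z // fX z = (g (⟦x⟧, i), c)}
        = #{x' // rX x x' ∧ p x' = c} := mk_fiber_quotient_prod g.injective p x i c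
      _ = #{y' // rY y y' ∧ q y' = c} := by rw [hp.mk_eq_ite, hq.mk_eq_ite, hxy]
      _ = #{z // fY z = ((⟦y⟧, j), c)} :=
        (mk_fiber_quotient_prod Function.injective_id q y j c).symm
      _ = #{z // fY z = (g (⟦x⟧, i), c)} := by rw [hy]
  obtain ⟨e, he⟩ := exists_equiv_of_mk_fiber_eq mk_fiber
  refine ⟨I, inferInstance, e, fun z => congrArg Prod.snd (he z), fun z z' => ?_⟩
  calc rY (e z).1 (e z').1 ∧ (e z).2 = (e z').2
      ↔ (fY (e z)).1 = (fY (e z')).1 := by simp only [fY, Prod.mk.injEq, Quotient.eq]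
    _ ↔ (fX z).1 = (fX z').1 := by rw [he, he]
    _ ↔ rX z.1 z'.1 ∧ z.2 = z'.2 := by
      simp only [fX, g.injective.eq_iff, Prod.mk.injEq, Quotient.eq]

end Gluing

section Codes

namespace PF

variable {M : Type}

/-- The tag of a formula code: `0` for atoms, `1` for negations, `2` for conjunctions and any
larger number for boxed formulas. -/
def tag (n : ℕ) : ℕ := n.unpair.1

/-- The code with its tag removed; for a negation this is the code of the negated formula. -/
def body (n : ℕ) : ℕ := n.unpair.2

/-- The code of the left conjunct of a conjunction, and the number of the operator of a boxed
formula. -/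
def left (n : ℕ) : ℕ := (body n).unpair.1

/-- The code of the right conjunct of a conjunction, and of the argument of a boxed formula. -/
def right (n : ℕ) : ℕ := (body n).unpair.2

theorem body_lt {n : ℕ} (h : tag n ≠ 0) : body n < n := by
  have htag : 1 ≤ tag n := Nat.one_le_iff_ne_zero.2 h
  calc body n < tag n + body n := by omega
    _ ≤ Nat.pair (tag n) (body n) := Nat.add_le_pair _ _
    _ = n := Nat.pair_unpair n

theorem left_lt {n : ℕ} (h : tag n ≠ 0) : left n < n :=
  (Nat.unpair_left_le _).trans_lt (body_lt h)

theorem right_lt {n : ℕ} (h : tag n ≠ 0) : right n < n :=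
  (Nat.unpair_right_le _).trans_lt (body_lt h)

variable [Encodable M] [Inhabited M]

/-- Total decoding of operator numbers; numbers that encode no operator yield `default`. -/
def operator (M : Type) [Encodable M] [Inhabited M] (o : ℕ) : M :=
  (Encodable.decode o).getD default

theorem operator_encode (m : M) : operator M (Encodable.encode m) = m := by
  simp only [operator, Encodable.encodek, Option.getD_some]

/-- Total decoding of numbers as formulas, a left inverse of the Gödel numbering. -/
def form (n : ℕ) : PF M :=
  if _h : tag n = 0 then .atom (body n)
  else if tag n = 1 then .neg (form (body n))
  else if tag n = 2 then .and (form (left n)) (form (right n))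
  else .box (operator M (left n)) (form (right n))
termination_by n
decreasing_by
  · exact body_lt _h
  · exact left_lt _h
  · exact right_lt _h
  · exact right_lt _h

theorem form_atom {n : ℕ} (h : tag n = 0) : form n = (.atom (body n) : PF M) := by
  rw [form, dif_pos h]

theorem form_neg {n : ℕ} (h : tag n = 1) : form n = (.neg (form (body n)) : PF M) := by
  rw [form, dif_neg (by omega), if_pos h]

theorem form_and {n : ℕ} (h : tag n = 2) :
    form n = (.and (form (left n)) (form (right n)) : PF M) := by
  rw [form, dif_neg (by omega), if_neg (by omega), if_pos h]

theorem form_box {n : ℕ} (h : 3 ≤ tag n) :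
    form n = (.box (operator M (left n)) (form (right n)) : PF M) := by
  rw [form, dif_neg (by omega), if_neg (by omega), if_neg (by omega)]

theorem form_encode (φ : PF M) : form (encode Encodable.encode φ) = φ := by
  induction φ with
  | atom n => rw [encode, form_atom] <;> simp only [tag, body, Nat.unpair_pair]
  | neg φ ih => rw [encode, form_neg] <;> simp only [tag, body, Nat.unpair_pair, ih]
  | and φ ψ ihφ ihψ =>
    rw [encode, form_and] <;> simp only [tag, body, left, right, Nat.unpair_pair, ihφ, ihψ]
  | box m φ ih =>
    rw [encode, form_box] <;>
      simp only [tag, body, left, right, Nat.unpair_pair, ih, operator_encode, le_refl]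

theorem form_surjective : Function.Surjective (form : ℕ → PF M) :=
  fun φ => ⟨_, form_encode φ⟩

end PF

end Codes

section Surrogates

open Cardinal PF

section

variable {K : Type} {F G : KFrame K} {own : ℕ → Option K} {V : ℕ → F.W → Prop} {lev : F.W → ℕ}

/-- In a surrogate model the atom `a` stands for the formula with code `a`, provided `a` is below
the level of the world under consideration. At `x` these atoms are required to obey the truth
clauses, where `own` lists the operator numbers that are interpreted by the frame; boxed formulas
with other operators are left unconstrained. -/
structure IsSurrogateAt (own : ℕ → Option K) (F : KFrame K) (V : ℕ → F.W → Prop)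
    (lev : F.W → ℕ) (x : F.W) : Prop where
  neg : ∀ a < lev x, tag a = 1 → (V a x ↔ ¬ V (body a) x)
  and : ∀ a < lev x, tag a = 2 → (V a x ↔ V (left a) x ∧ V (right a) x)
  box : ∀ a < lev x, 3 ≤ tag a → ∀ m, own (left a) = some m →
    (∀ y, F.R m x y → right a < lev y) ∧ (V a x ↔ ∀ y, F.R m x y → V (right a) y)

theorem IsBoundedMorphism.isSurrogateAt_iff {f : F.W → G.W} (hf : IsBoundedMorphism F G f)
    {V : ℕ → G.W → Prop} {lev : G.W → ℕ} {x : F.W} :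
    IsSurrogateAt own G V lev (f x) ↔
      IsSurrogateAt own F (fun a x => V a (f x)) (fun x => lev (f x)) x :=
  ⟨fun ⟨hneg, hand, hbox⟩ => ⟨hneg, hand, by simpa only [hf.forall_rel_iff] using hbox⟩,
    fun ⟨hneg, hand, hbox⟩ => ⟨hneg, hand, by simpa only [hf.forall_rel_iff] using hbox⟩⟩

theorem IsSurrogateAt.congr {V' : ℕ → F.W → Prop} {x : F.W} (h : IsSurrogateAt own F V lev x)
    (hV : ∀ y, ∀ a < lev y, (V a y ↔ V' a y)) : IsSurrogateAt own F V' lev x where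
  neg a ha ht := by
    have hlt := body_lt (n := a) (by omega)
    rw [← hV x a ha, ← hV x _ (hlt.trans ha), h.neg a ha ht]
  and a ha ht := by
    have hl := left_lt (n := a) (by omega)
    have hr := right_lt (n := a) (by omega)
    rw [← hV x a ha, ← hV x _ (hl.trans ha), ← hV x _ (hr.trans ha), h.and a ha ht]
  box a ha ht m hm := by
    obtain ⟨hlev, hbox⟩ := h.box a ha ht m hm
    refine ⟨hlev, ?_⟩
    rw [← hV x a ha, hbox]
    exact forall₂_congr fun y hy => hV y _ (hlev y hy)

theorem IsSurrogateAt.of_reducts {K₁ K₂ : Type} {f₁ : K₁ → K} {f₂ : K₂ → K}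
    {own₁ : ℕ → Option K₁} {own₂ : ℕ → Option K₂} {x : F.W}
    (h₁ : IsSurrogateAt own₁ (F.reduct f₁) V lev x) (h₂ : IsSurrogateAt own₂ (F.reduct f₂) V lev x)
    (hown : ∀ o m, own o = some m →
      (∃ m₁, own₁ o = some m₁ ∧ f₁ m₁ = m) ∨ ∃ m₂, own₂ o = some m₂ ∧ f₂ m₂ = m) :
    IsSurrogateAt own F V lev x where
  neg := h₁.neg
  and := h₁.and
  box a ha ht m hm := by
    obtain ⟨m₁, hm₁, rfl⟩ | ⟨m₂, hm₂, rfl⟩ := hown _ m hm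
    · exact h₁.box a ha ht m₁ hm₁
    · exact h₂.box a ha ht m₂ hm₂

theorem PVal_form_iff [Encodable K] [Inhabited K]
    (h : ∀ x, IsSurrogateAt (fun o => some (operator K o)) F V lev x) (a : ℕ) {x : F.W}
    (ha : a < lev x) : PVal (fun n => V (Nat.pair 0 n)) (form a) x ↔ V a x := by
  induction a using Nat.strong_induction_on generalizing x with
  | _ a ih =>
    by_cases h0 : tag a = 0
    · rw [form_atom h0, PVal, body, ← h0, tag, Nat.pair_unpair]
    have hb := body_lt h0
    have hl := left_lt h0
    have hr := right_lt h0
    obtain h1 | h2 | h3 : tag a = 1 ∨ tag a = 2 ∨ 3 ≤ tag a := by omega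
    · rw [form_neg h1, PVal, ih _ hb (hb.trans ha), (h x).neg a ha h1]
    · rw [form_and h2, PVal, ih _ hl (hl.trans ha), ih _ hr (hr.trans ha), (h x).and a ha h2]
    · obtain ⟨hlev, hbox⟩ := (h x).box a ha h3 _ rfl
      rw [form_box h3, PVal, hbox]
      exact forall₂_congr fun y hy => ih _ hr (hlev y hy)

end

section

/-- The colour of a world of a surrogate model: its level and the atoms below the level that hold
there. -/
def colour {X : Type} (V : ℕ → X → Prop) (lev : X → ℕ) (x : X) : ℕ × Set ℕ :=
  (lev x, {a | a < lev x ∧ V a x})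

variable {X Y : Type} {V : ℕ → X → Prop} {lev : X → ℕ} {V' : ℕ → Y → Prop} {lev' : Y → ℕ}
  {x : X} {y : Y}

theorem lev_eq_of_colour_eq (h : colour V lev x = colour V' lev' y) : lev x = lev' y :=
  congrArg Prod.fst h

theorem iff_of_colour_eq (h : colour V lev x = colour V' lev' y) {a : ℕ}
    (ha : a < lev x) : V a x ↔ V' a y := by
  have ha' : a < lev' y := lev_eq_of_colour_eq h ▸ ha
  have := Set.ext_iff.1 (congrArg Prod.snd h) a
  simpa only [colour, Set.mem_ofPred_eq, ha, ha', true_and] using this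

end

section

variable {K : Type} {e : K} {L : Set (PF K)} {own : ℕ → Option K} {κ : Cardinal.{0}}

/-- A surrogate model on a frame for `L` whose colouring is homogeneous along the operator `e`. -/
structure SurrogateModel (e : K) (L : Set (PF K)) (own : ℕ → Option K) (κ : Cardinal.{0}) where
  F : KFrame K
  V : ℕ → F.W → Prop
  lev : F.W → ℕ
  frameFor : FrameFor F L
  isSurrogateAt : ∀ x, IsSurrogateAt own F V lev x
  isHomogeneous : IsHomogeneous (F.R e) (colour V lev) κ

namespace SurrogateModel

/-- The palettes of the `e`-classes of a surrogate model. -/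
def palettes (𝔐 : SurrogateModel e L own κ) : Set (Set (ℕ × Set ℕ)) :=
  Set.range (palette (𝔐.F.R e) (colour 𝔐.V 𝔐.lev))

/-- The disjoint union of a family of surrogate models. -/
def sigma {J : Type} [Nonempty J] (𝔐 : J → SurrogateModel e L own κ) :
    SurrogateModel e L own κ where
  F := KFrame.sigma fun j => (𝔐 j).F
  V a z := (𝔐 z.1).V a z.2
  lev z := (𝔐 z.1).lev z.2
  frameFor := FrameFor.sigma fun j => (𝔐 j).frameFor
  isSurrogateAt := fun ⟨j, x⟩ =>
    (isBoundedMorphism_sigma_mk _ j).isSurrogateAt_iff.2 ((𝔐 j).isSurrogateAt x)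
  isHomogeneous := by
    rintro ⟨j, x⟩ c
    have fiber : {y // (𝔐 j).F.R e x y ∧ colour (𝔐 j).V (𝔐 j).lev y = c} ≃
        {z : Σ j, (𝔐 j).F.W // (∃ y, (𝔐 j).F.R e x y ∧ ⟨j, y⟩ = z) ∧
          colour (𝔐 z.1).V (𝔐 z.1).lev z.2 = c} :=
      Equiv.ofBijective (fun y => ⟨⟨j, y⟩, ⟨y, y.2.1, rfl⟩, y.2.2⟩)
        ⟨fun y y' h => Subtype.ext
          (sigma_mk_injective (β := fun j => (𝔐 j).F.W) (congrArg Subtype.val h)),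
          fun ⟨_, ⟨y, hy, rfl⟩, hc⟩ => ⟨⟨y, hy, hc⟩, rfl⟩⟩
    exact Cardinal.mk_congr fiber ▸ (𝔐 j).isHomogeneous x c

theorem palettes_sigma {J : Type} [Nonempty J] (𝔐 : J → SurrogateModel e L own κ) :
    (sigma 𝔐).palettes = ⋃ j, (𝔐 j).palettes := by
  have palette_sigma (j : J) (x : (𝔐 j).F.W) :
      palette ((sigma 𝔐).F.R e) (colour (sigma 𝔐).V (sigma 𝔐).lev) ⟨j, x⟩ =
        palette ((𝔐 j).F.R e) (colour (𝔐 j).V (𝔐 j).lev) x := by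
    refine Set.Subset.antisymm ?_ ?_
    · rintro _ ⟨_, ⟨y, hy, rfl⟩, rfl⟩
      exact ⟨y, hy, rfl⟩
    · rintro _ ⟨y, hy, rfl⟩
      exact ⟨⟨j, y⟩, ⟨y, hy, rfl⟩, rfl⟩
  ext S
  simp only [palettes, Set.mem_iUnion, Set.mem_range]
  constructor
  · rintro ⟨⟨j, x⟩, rfl⟩
    exact ⟨j, x, (palette_sigma j x).symm⟩
  · rintro ⟨j, x, rfl⟩
    exact ⟨⟨j, x⟩, palette_sigma j x⟩

theorem exists_palettes_eq {D : Set (Set (ℕ × Set ℕ))} (hD : D.Nonempty)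
    (h : ∀ S ∈ D, ∃ 𝔐 : SurrogateModel e L own κ, S ∈ 𝔐.palettes ∧ 𝔐.palettes ⊆ D) :
    ∃ 𝔐 : SurrogateModel e L own κ, 𝔐.palettes = D := by
  choose 𝔐 mem subset using fun S : D => h S S.2
  have := hD.to_subtype
  refine ⟨sigma 𝔐, (palettes_sigma 𝔐).trans (Set.Subset.antisymm ?_ fun S hS => ?_)⟩
  · exact Set.iUnion_subset subset
  · exact Set.mem_iUnion.2 ⟨⟨S, hS⟩, mem ⟨S, hS⟩⟩

end SurrogateModel

end

section

variable {M1 M2 : Type}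

/-- The frame on `F₁.W × I` that has the left operators and `□_E` from copies of `F₁`, and the right
operators from copies of `F₂`, transported along `e`. -/
def KFrame.glue (F₁ : KFrame (Option M1)) (F₂ : KFrame (Option M2)) (I : Type) [hI : Nonempty I]
    (e : F₁.W × I ≃ F₂.W × I) : KFrame (Option (M1 ⊕ M2)) where
  W := F₁.W × I
  ne := ⟨(F₁.ne.some, hI.some)⟩
  R
    | none, z, z' => F₁.R none z.1 z'.1 ∧ z.2 = z'.2
    | some (Sum.inl m), z, z' => F₁.R (some m) z.1 z'.1 ∧ z.2 = z'.2
    | some (Sum.inr m), z, z' => F₂.R (some m) (e z).1 (e z').1 ∧ (e z).2 = (e z').2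

variable {F₁ : KFrame (Option M1)} {F₂ : KFrame (Option M2)} {I : Type} [Nonempty I]
  {e : F₁.W × I ≃ F₂.W × I}

theorem isBoundedMorphism_glue_left (i : I) :
    IsBoundedMorphism F₁ ((KFrame.glue F₁ F₂ I e).reduct (Option.map Sum.inl))
      (fun x => (x, i)) := by
  have rel_iff (R : F₁.W → F₁.W → Prop) (x : F₁.W) (z : F₁.W × I) :
      R x z.1 ∧ i = z.2 ↔ ∃ y, R x y ∧ (y, i) = z :=
    ⟨fun ⟨h, hi⟩ => ⟨z.1, h, Prod.ext rfl hi⟩, fun ⟨_, h, hz⟩ => hz ▸ ⟨h, rfl⟩⟩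
  rintro (_ | m) x z <;> exact rel_iff _ x z

theorem isBoundedMorphism_glue_right
    (he : ∀ z z', F₂.R none (e z).1 (e z').1 ∧ (e z).2 = (e z').2 ↔
      F₁.R none z.1 z'.1 ∧ z.2 = z'.2) (i : I) :
    IsBoundedMorphism F₂ ((KFrame.glue F₁ F₂ I e).reduct (Option.map Sum.inr))
      (fun y => e.symm (y, i)) := by
  have rel_iff (R : F₂.W → F₂.W → Prop) (x : F₂.W) (z : F₁.W × I) :
      R (e (e.symm (x, i))).1 (e z).1 ∧ (e (e.symm (x, i))).2 = (e z).2 ↔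
        ∃ y, R x y ∧ e.symm (y, i) = z := by
    simp only [e.apply_symm_apply, e.symm_apply_eq]
    exact ⟨fun ⟨h, hi⟩ => ⟨_, h, Prod.ext rfl hi⟩, fun ⟨_, h, hz⟩ => hz ▸ ⟨h, rfl⟩⟩
  rintro (_ | m) x z
  · exact (he _ z).symm.trans (rel_iff _ x z)
  · exact rel_iff _ x z

/-- The restriction of the combined signature to its left component. -/
def restrictLeft : Option (M1 ⊕ M2) → Option (Option M1)
  | none => some none
  | some (Sum.inl m) => some (some m)
  | some (Sum.inr _) => none

/-- The restriction of the combined signature to its right component. -/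
def restrictRight : Option (M1 ⊕ M2) → Option (Option M2)
  | none => some none
  | some (Sum.inl _) => none
  | some (Sum.inr m) => some (some m)

theorem exists_restrict_eq_some (m : Option (M1 ⊕ M2)) :
    (∃ m₁, restrictLeft m = some m₁ ∧ m₁.map Sum.inl = m) ∨
      ∃ m₂, restrictRight m = some m₂ ∧ m₂.map Sum.inr = m := by
  obtain _ | m | m := m
  · exact .inl ⟨none, rfl, rfl⟩
  · exact .inl ⟨some m, rfl, rfl⟩
  · exact .inr ⟨some m, rfl, rfl⟩

variable [Encodable M1] [Encodable M2]

variable (M1 M2) in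
/-- The interpretation of the operator numbers of the combined signature in the left component. -/
def ownLeft (o : ℕ) : Option (Option M1) := restrictLeft (operator (Option (M1 ⊕ M2)) o)

variable (M1 M2) in
/-- The interpretation of the operator numbers of the combined signature in the right component. -/
def ownRight (o : ℕ) : Option (Option M2) := restrictRight (operator (Option (M1 ⊕ M2)) o)

theorem isSurrogateAt_glue
    (he : ∀ z z', F₂.R none (e z).1 (e z').1 ∧ (e z).2 = (e z').2 ↔
      F₁.R none z.1 z'.1 ∧ z.2 = z'.2)
    {V₁ : ℕ → F₁.W → Prop} {V₂ : ℕ → F₂.W → Prop} {lev₁ : F₁.W → ℕ} {lev₂ : F₂.W → ℕ}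
    (hcol : ∀ z, colour V₂ lev₂ (e z).1 = colour V₁ lev₁ z.1)
    (h₁ : ∀ x, IsSurrogateAt (ownLeft M1 M2) F₁ V₁ lev₁ x)
    (h₂ : ∀ y, IsSurrogateAt (ownRight M1 M2) F₂ V₂ lev₂ y) (z : F₁.W × I) :
    IsSurrogateAt (fun o => some (operator (Option (M1 ⊕ M2)) o)) (KFrame.glue F₁ F₂ I e)
      (fun a z => V₁ a z.1) (fun z => lev₁ z.1) z := by
  refine IsSurrogateAt.of_reducts (f₁ := Option.map Sum.inl) (f₂ := Option.map Sum.inr)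
    (own₁ := ownLeft M1 M2) (own₂ := ownRight M1 M2) ?_ ?_ ?_
  · exact (isBoundedMorphism_glue_left z.2).isSurrogateAt_iff.2 (h₁ z.1)
  · obtain ⟨⟨y, i⟩, rfl⟩ := e.symm.surjective z
    refine (isBoundedMorphism_glue_right he i).isSurrogateAt_iff.2 ?_
    have hcol' (y : F₂.W) : colour V₂ lev₂ y = colour V₁ lev₁ (e.symm (y, i)).1 := by
      simpa only [e.apply_symm_apply] using hcol (e.symm (y, i))
    have hlev (y : F₂.W) : lev₁ (e.symm (y, i)).1 = lev₂ y := (lev_eq_of_colour_eq (hcol' y)).symm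
    simp only [hlev]
    exact (h₂ y).congr fun y a ha => iff_of_colour_eq (hcol' y) ha
  · rintro o _ ⟨⟩
    exact exists_restrict_eq_some _

theorem SurrogateModel.exists_fusion_model {L1 : Set (PF (Option M1))} {L2 : Set (PF (Option M2))}
    (hS1 : ContainsS5 L1 none) (hS2 : ContainsS5 L2 none) {κ : Cardinal.{0}}
    (𝔐₁ : SurrogateModel none L1 (ownLeft M1 M2) κ)
    (𝔐₂ : SurrogateModel none L2 (ownRight M1 M2) κ) (h : 𝔐₁.palettes = 𝔐₂.palettes) :
    ∃ F : KFrame (Option (M1 ⊕ M2)), FrameFor F (fusionE L1 L2) ∧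
      ∃ (V : ℕ → F.W → Prop) (π : F.W → 𝔐₁.F.W), π.Surjective ∧
        ∀ z, ∀ a < 𝔐₁.lev (π z), (PVal V (form a) z ↔ 𝔐₁.V a (π z)) := by
  obtain ⟨I, hI, e, hcol, he⟩ := exists_equiv_prod_of_palettes_eq
    (rX := ⟨_, 𝔐₁.frameFor.equivalence hS1⟩) (rY := ⟨_, 𝔐₂.frameFor.equivalence hS2⟩)
    𝔐₁.isHomogeneous 𝔐₂.isHomogeneous h
  refine ⟨KFrame.glue 𝔐₁.F 𝔐₂.F I e, FrameFor.fusionE ?_ ?_, _, Prod.fst, ?_, fun z a ha =>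
    PVal_form_iff (isSurrogateAt_glue he hcol 𝔐₁.isSurrogateAt 𝔐₂.isSurrogateAt) a ha⟩
  · exact frameFor_of_boundedMorphisms fun z =>
      ⟨𝔐₁.F, _, 𝔐₁.frameFor, isBoundedMorphism_glue_left z.2, z.1, rfl⟩
  · exact frameFor_of_boundedMorphisms fun z => ⟨𝔐₂.F, _, 𝔐₂.frameFor,
      isBoundedMorphism_glue_right he (e z).2, (e z).1, e.symm_apply_apply z⟩
  · exact Prod.fst_surjective

end

end Surrogates

section Formulas

namespace PF

variable {M M' : Type}

/-- Verum. -/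
def top : PF M := neg bot

/-- The biconditional. -/
def iff (φ ψ : PF M) : PF M := and (imp φ ψ) (imp ψ φ)

/-- The conjunction of `f 0, …, f (n - 1)`. -/
def conj (f : ℕ → PF M) : ℕ → PF M
  | 0 => top
  | n + 1 => and (conj f n) (f n)

/-- The disjunction of `f 0, …, f (n - 1)`. -/
def disj (f : ℕ → PF M) (n : ℕ) : PF M := neg (conj (fun i => neg (f i)) n)

/-- The formula `φ` or its negation, according to a sign. -/
def literal (b : Bool) (φ : PF M) : PF M := cond b φ (neg φ)

/-- The complete description of the atoms below `k` whose truth values are the bits of `T`. -/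
def typeFormula (k T : ℕ) : PF M := conj (fun i => literal (T.testBit i) (atom i)) k

/-- The complete description of an `e`-class: the bits of `C` tell which of the `2 ^ k` types of
level `k` occur in it. -/
def paletteFormula (e : M) (k C : ℕ) : PF M :=
  conj (fun T => literal (C.testBit T) (dia e (typeFormula k T))) (2 ^ k)

/-- The palette of the `e`-class is among those listed by `D`. The bit of `D` with index
`Nat.pair k C` stands for the palette of level `k` with bits `C`. -/
def admissible (e : M) (D k : ℕ) : PF M :=
  disj (fun C => and (literal (D.testBit (Nat.pair k C)) top) (paletteFormula e k C)) (2 ^ 2 ^ k)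

/-- The box of the operator with number `o`, and verum if `own` does not interpret that number. -/
def boxOf (own : ℕ → Option M) (o : ℕ) (φ : PF M) : PF M := (own o).elim top fun m => box m φ

/-- The truth clause of the formula with code `a`, with atoms standing for the formulas that they
encode; compare `IsSurrogateAt`. -/
def clause (own : ℕ → Option M) (a : ℕ) : PF M :=
  if tag a = 0 then top
  else if tag a = 1 then iff (atom a) (neg (atom (body a)))
  else if tag a = 2 then iff (atom a) (and (atom (left a)) (atom (right a)))
  else (own (left a)).elim top fun m => iff (atom a) (box m (atom (right a)))

/-- The truth clauses of all formulas with codes below `k`. -/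
def clauses (own : ℕ → Option M) (k : ℕ) : PF M := conj (clause own) k

/-- The whole `e`-class obeys admissibility and the truth clauses at level `k`, and this remains so,
at levels dropping by one at each step, along the operators with numbers below the level. -/
def guard (e : M) (own : ℕ → Option M) (D : ℕ) : ℕ → PF M
  | 0 => top
  | k + 1 => box e (and (and (admissible e D (k + 1)) (clauses own (k + 1)))
      (conj (fun o => boxOf own o (guard e own D k)) (k + 1)))

theorem mapOp_conj (g : M → M') (f : ℕ → PF M) (n : ℕ) :
    mapOp g (conj f n) = conj (fun i => mapOp g (f i)) n := by
  induction n with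
  | zero => rfl
  | succ n ih => rw [conj, conj, mapOp, ih]

theorem mapOp_literal (g : M → M') (b : Bool) (φ : PF M) :
    mapOp g (literal b φ) = literal b (mapOp g φ) := by
  cases b <;> rfl

theorem mapOp_paletteFormula (g : M → M') (e : M) (k C : ℕ) :
    mapOp g (paletteFormula e k C) = paletteFormula (g e) k C := by
  simp only [paletteFormula, typeFormula, dia, mapOp_conj, mapOp_literal, mapOp]

/-- Assignments of truth values to formulas that commute with the Boolean connectives. -/
structure IsBooleanEval (E : PF M → Prop) : Prop where
  neg : ∀ {φ}, E (neg φ) ↔ ¬ E φ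
  and : ∀ {φ ψ}, E (and φ ψ) ↔ E φ ∧ E ψ

theorem isBooleanEval_tautEval (v : PF M → Prop) : IsBooleanEval (tautEval v) :=
  ⟨Iff.rfl, Iff.rfl⟩

theorem isBooleanEval_PVal {F : KFrame M} (V : ℕ → F.W → Prop) (w : F.W) :
    IsBooleanEval fun φ => PVal V φ w :=
  ⟨Iff.rfl, Iff.rfl⟩

namespace IsBooleanEval

variable {E : PF M → Prop} (hE : IsBooleanEval E) {φ ψ : PF M} {e : M}
include hE

theorem imp : E (imp φ ψ) ↔ (E φ → E ψ) := by
  simp only [PF.imp, hE.neg, hE.and, not_and, not_not]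

theorem top : E top := by
  simp only [PF.top, PF.bot, hE.neg, hE.and, and_not_self_iff, not_false_eq_true]

theorem iff : E (iff φ ψ) ↔ (E φ ↔ E ψ) := by
  simp only [PF.iff, hE.and, hE.imp, iff_iff_implies_and_implies]

theorem literal {b : Bool} : E (literal b φ) ↔ (b = true ↔ E φ) := by
  cases b <;> simp only [PF.literal, cond_true, cond_false, hE.neg, true_iff, false_iff,
    Bool.false_eq_true]

theorem conj {f : ℕ → PF M} {n : ℕ} : E (conj f n) ↔ ∀ i < n, E (f i) := by
  induction n with
  | zero => simp only [PF.conj, hE.top, Nat.not_lt_zero, false_implies, implies_true]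
  | succ n ih => simp only [PF.conj, hE.and, ih, Nat.forall_lt_succ_right]

theorem disj {f : ℕ → PF M} {n : ℕ} : E (disj f n) ↔ ∃ i < n, E (f i) := by
  simp only [PF.disj, hE.neg, hE.conj, not_forall, not_not, exists_prop]

theorem typeFormula {k T : ℕ} :
    E (typeFormula k T) ↔ ∀ i < k, (T.testBit i = true ↔ E (atom i)) := by
  simp only [PF.typeFormula, hE.conj, hE.literal]

theorem paletteFormula {k C : ℕ} : E (paletteFormula e k C) ↔
    ∀ T < 2 ^ k, (C.testBit T = true ↔ E (dia e (PF.typeFormula k T))) := by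
  simp only [PF.paletteFormula, hE.conj, hE.literal]

theorem admissible {D k : ℕ} : E (admissible e D k) ↔
    ∃ C < 2 ^ 2 ^ k, D.testBit (Nat.pair k C) = true ∧ E (PF.paletteFormula e k C) := by
  simp only [PF.admissible, hE.disj, hE.and, hE.literal, hE.top, iff_true]

theorem clauses {own : ℕ → Option M} {k : ℕ} :
    E (clauses own k) ↔ ∀ a < k, E (clause own a) :=
  hE.conj

end IsBooleanEval

theorem exists_testBit_iff (P : ℕ → Prop) (n : ℕ) :
    ∃ T < 2 ^ n, ∀ i < n, (T.testBit i = true ↔ P i) := by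
  classical
  refine ⟨Nat.ofBits fun i : Fin n => decide (P i), Nat.ofBits_lt_two_pow _, fun i hi => ?_⟩
  rw [Nat.testBit_ofBits_lt _ _ hi, decide_eq_true_iff]

theorem IsBooleanEval.exists_typeFormula {E : PF M → Prop} (hE : IsBooleanEval E) (k : ℕ) :
    ∃ T < 2 ^ k, E (PF.typeFormula k T) := by
  obtain ⟨T, hT, h⟩ := exists_testBit_iff (fun i => E (atom i)) k
  exact ⟨T, hT, hE.typeFormula.2 h⟩

theorem IsBooleanEval.exists_paletteFormula {E : PF M → Prop} (hE : IsBooleanEval E) (e : M)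
    (k : ℕ) : ∃ C < 2 ^ 2 ^ k, E (PF.paletteFormula e k C) := by
  obtain ⟨C, hC, h⟩ := exists_testBit_iff (fun T => E (dia e (PF.typeFormula k T))) (2 ^ k)
  exact ⟨C, hC, hE.paletteFormula.2 h⟩

end PF

end Formulas

section Theories

open PF

variable {M M' : Type} {e : M} {Θ : Set (PF M)}

/-- Sets of formulas that are closed under classical consequence and necessitation and make the
operator `e` reflexive. Unlike logics they need not be closed under substitution. -/
structure IsTheory (e : M) (Θ : Set (PF M)) : Prop where
  taut : ∀ {φ}, IsTaut φ → φ ∈ Θ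
  mp : ∀ {φ ψ}, imp φ ψ ∈ Θ → φ ∈ Θ → ψ ∈ Θ
  nec : ∀ (m) {φ}, φ ∈ Θ → box m φ ∈ Θ
  refl : ∀ φ, imp (box e φ) φ ∈ Θ

theorem tautEval_substP (v : PF M → Prop) (σ : ℕ → PF M) (φ : PF M) :
    tautEval v (substP σ φ) ↔ tautEval (fun ψ => tautEval v (substP σ ψ)) φ := by
  induction φ with
  | atom n => rfl
  | neg φ ih => exact not_congr ih
  | and φ ψ ihφ ihψ => exact and_congr ihφ ihψ
  | box m φ _ => rfl

theorem tautEval_mapOp (f : M → M') (v : PF M' → Prop) (φ : PF M) :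
    tautEval v (mapOp f φ) ↔ tautEval (fun ψ => tautEval v (mapOp f ψ)) φ := by
  induction φ with
  | atom n => rfl
  | neg φ ih => exact not_congr ih
  | and φ ψ ihφ ihψ => exact and_congr ihφ ihψ
  | box m φ _ => rfl

theorem isTheory_fusionE {M1 M2 : Type} {L1 : Set (PF (Option M1))} {L2 : Set (PF (Option M2))}
    (hS1 : ContainsS5 L1 none) : IsTheory none (fusionE L1 L2) where
  taut hφ _ hL := hL.1.taut _ hφ
  mp himp hφ L hL := hL.1.mp _ _ (himp L hL) (hφ L hL)
  nec m _ hφ L hL := hL.1.nec m _ (hφ L hL)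
  refl φ _ hL := hL.1.subst (fun _ => φ) _ (hL.2.1 ⟨_, hS1.1, rfl⟩)

namespace IsTheory

theorem preimage_substP (hΘ : IsTheory e Θ) (σ : ℕ → PF M) : IsTheory e (substP σ ⁻¹' Θ) where
  taut hφ := hΘ.taut fun v => (tautEval_substP v σ _).2 (hφ _)
  mp himp hφ := hΘ.mp himp hφ
  nec m _ hφ := hΘ.nec m hφ
  refl _ := hΘ.refl _

theorem preimage_mapOp {f : M' → M} {e : M'} (hΘ : IsTheory (f e) Θ) :
    IsTheory e (mapOp f ⁻¹' Θ) where
  taut hφ := hΘ.taut fun v => (tautEval_mapOp f v _).2 (hφ _)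
  mp himp hφ := hΘ.mp himp hφ
  nec m _ hφ := hΘ.nec (f m) hφ
  refl _ := hΘ.refl _

theorem setOf_PGlobal (hΘ : IsTheory e Θ) (φ : PF M) : IsTheory e {ψ | PGlobal Θ φ ψ} where
  taut hψ := .ax (hΘ.taut hψ)
  mp himp hψ := .mp himp hψ
  nec m _ hψ := .nec m hψ
  refl _ := .ax (hΘ.refl _)

variable (hΘ : IsTheory e Θ)
include hΘ

theorem mem_of_tautEval {φ ψ : PF M} (hφ : φ ∈ Θ) (h : ∀ v, tautEval v φ → tautEval v ψ) :
    ψ ∈ Θ :=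
  hΘ.mp (hΘ.taut fun v => (isBooleanEval_tautEval v).imp.2 (h v)) hφ

theorem and_mem {φ ψ : PF M} (hφ : φ ∈ Θ) (hψ : ψ ∈ Θ) : and φ ψ ∈ Θ :=
  hΘ.mp (hΘ.mem_of_tautEval hφ fun v hv => (isBooleanEval_tautEval v).imp.2 fun hv' => ⟨hv, hv'⟩)
    hψ

theorem top_mem : top ∈ Θ := hΘ.taut fun v => (isBooleanEval_tautEval v).top

theorem conj_mem {f : ℕ → PF M} {n : ℕ} (h : ∀ i < n, f i ∈ Θ) : conj f n ∈ Θ := by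
  induction n with
  | zero => exact hΘ.top_mem
  | succ n ih =>
    exact hΘ.and_mem (ih fun i hi => h i (hi.trans n.lt_succ_self)) (h n n.lt_succ_self)

theorem iff_mem (φ : PF M) : iff φ φ ∈ Θ :=
  hΘ.taut fun v => (isBooleanEval_tautEval v).iff.2 Iff.rfl

theorem mem_of_PGlobal {L : Set (PF M)} {φ ψ : PF M} (hL : L ⊆ Θ) (hφ : φ ∈ Θ)
    (h : PGlobal L φ ψ) : ψ ∈ Θ := by
  induction h with
  | ax h => exact hL h
  | prem => exact hφ
  | mp _ _ himp hψ => exact hΘ.mp himp hψ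
  | nec m _ hψ => exact hΘ.nec m hψ

theorem clause_mem {K : Type} [Encodable M] [Inhabited M] {own : ℕ → Option K} {f : K → M}
    (hown : ∀ o m, own o = some m → f m = operator M o) (a : ℕ) :
    clause own a ∈ mapOp f ⁻¹' (substP form ⁻¹' Θ) := by
  rw [clause]
  split_ifs with h0 h1 h2
  · exact hΘ.preimage_substP form |>.top_mem
  · have : iff (form a) (neg (form (body a))) ∈ Θ := form_neg (M := M) h1 ▸ hΘ.iff_mem _
    exact this
  · have : iff (form a) (and (form (left a)) (form (right a))) ∈ Θ :=
      form_and (M := M) h2 ▸ hΘ.iff_mem _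
    exact this
  · rcases hm : own (left a) with _ | m
    · exact hΘ.preimage_substP form |>.top_mem
    · have : iff (form a) (box (f m) (form (right a))) ∈ Θ := by
        rw [hown _ m hm, ← form_box (by omega)]
        exact hΘ.iff_mem _
      exact this

end IsTheory

end Theories

section CanonicalPalettes

open PF

variable {M K : Type} {e : M} {Θ : Set (PF M)} {D n k N T : ℕ}

/-- `D` lists exactly those palettes of level at most `n` that are consistent with `Θ`. -/
def IsCanonical (e : M) (Θ : Set (PF M)) (D n : ℕ) : Prop :=
  ∀ k ≤ n, ∀ C < 2 ^ 2 ^ k,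
    (D.testBit (Nat.pair k C) = true ↔ neg (paletteFormula e k C) ∉ Θ)

/-- A strict upper bound for the bit indices `Nat.pair k C` with `k ≤ n` and `C < 2 ^ 2 ^ k`. -/
def bitBound (n : ℕ) : ℕ := Nat.pair n (2 ^ 2 ^ n)

theorem pair_lt_bitBound {C : ℕ} (hk : k ≤ n) (hC : C < 2 ^ 2 ^ k) :
    Nat.pair k C < bitBound n :=
  calc Nat.pair k C < Nat.pair k (2 ^ 2 ^ n) :=
        Nat.pair_lt_pair_right k (hC.trans_le (by gcongr <;> norm_num))
    _ ≤ Nat.pair n (2 ^ 2 ^ n) := hk.eq_or_lt.elim (fun h => h ▸ le_rfl)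
        fun h => (Nat.pair_lt_pair_left _ h).le

theorem exists_isCanonical (e : M) (Θ : Set (PF M)) (n : ℕ) :
    ∃ D < 2 ^ bitBound n, IsCanonical e Θ D n := by
  obtain ⟨D, hD, h⟩ := exists_testBit_iff
    (fun i => neg (paletteFormula e i.unpair.1 i.unpair.2) ∉ Θ) (bitBound n)
  refine ⟨D, hD, fun k hk C hC => ?_⟩
  rw [h _ (pair_lt_bitBound hk hC), Nat.unpair_pair]

/-- The type with bits `T` occurs in some palette of level `k` that is listed by `D`. -/
def Occurs (D k T : ℕ) : Prop :=
  ∃ C < 2 ^ 2 ^ k, D.testBit (Nat.pair k C) = true ∧ T < 2 ^ k ∧ C.testBit T = true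

/-- Each palette of level at most `n` listed by `D` is consistent in `L` with the guard of its
level. -/
def LocallyConsistent (e : K) (own : ℕ → Option K) (L : Set (PF K)) (D n : ℕ) : Prop :=
  ∀ k ≤ n, ∀ C < 2 ^ 2 ^ k, D.testBit (Nat.pair k C) = true →
    neg (and (paletteFormula e k C) (guard e own D k)) ∉ L

/-- Each palette of level `n` listed by `D` is consistent in `L` with admissibility and the truth
clauses as global assumptions. -/
def GloballyConsistent (e : K) (own : ℕ → Option K) (L : Set (PF K)) (D n : ℕ) : Prop :=
  ∀ C < 2 ^ 2 ^ n, D.testBit (Nat.pair n C) = true →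
    ¬ PGlobal L (and (admissible e D n) (clauses own n)) (neg (paletteFormula e n C))

theorem IsTheory.exists_occurs (hΘ : IsTheory e Θ) (hN : N < n) (hD : admissible e D n ∈ Θ)
    (hatom : atom N ∉ Θ) : ∃ T, Occurs D n T ∧ ¬ T.testBit N = true := by
  by_contra! hall
  refine hatom ?_
  have hrefl : conj (fun T => imp (box e (neg (typeFormula n T))) (neg (typeFormula n T))) (2 ^ n)
      ∈ Θ := hΘ.conj_mem fun T _ => hΘ.refl _
  refine hΘ.mem_of_tautEval (hΘ.and_mem hrefl hD) fun v ⟨hrefl, hadm⟩ => ?_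
  have hv := isBooleanEval_tautEval v
  obtain ⟨C, hC, hDC, hpalette⟩ := hv.admissible.1 hadm
  obtain ⟨T, hT, htype⟩ := hv.exists_typeFormula n
  have hdia : tautEval v (dia e (typeFormula n T)) := fun hbox =>
    hv.imp.1 (hv.conj.1 hrefl T hT) hbox htype
  have hCT := (hv.paletteFormula.1 hpalette T hT).2 hdia
  exact (hv.typeFormula.1 htype N hN).1 (hall T ⟨C, hC, hDC, hT, hCT⟩)

namespace IsCanonical

variable {f : K → M} {e : K} {own : ℕ → Option K} {L : Set (PF K)}

theorem preimage_mapOp (hD : IsCanonical (f e) Θ D n) : IsCanonical e (mapOp f ⁻¹' Θ) D n :=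
  fun k hk C hC => (hD k hk C hC).trans (by rw [← mapOp_paletteFormula]; rfl)

variable {Θ : Set (PF K)} (hΘ : IsTheory e Θ) (hD : IsCanonical e Θ D n)
include hΘ hD

theorem admissible_mem (hk : k ≤ n) : admissible e D k ∈ Θ := by
  have hlisted : conj (fun C => imp (paletteFormula e k C) (literal (D.testBit (Nat.pair k C)) top))
      (2 ^ 2 ^ k) ∈ Θ := by
    refine hΘ.conj_mem fun C hC => ?_
    by_cases hbit : D.testBit (Nat.pair k C) = true
    · refine hΘ.mem_of_tautEval hΘ.top_mem fun v htop => ?_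
      have hv := isBooleanEval_tautEval v
      exact hv.imp.2 fun _ => hv.literal.2 (iff_of_true hbit htop)
    · have hneg := not_not.1 (mt (hD k hk C hC).2 hbit)
      refine hΘ.mem_of_tautEval hneg fun v hneg => ?_
      exact (isBooleanEval_tautEval v).imp.2 fun hpalette => absurd hpalette hneg
  refine hΘ.mem_of_tautEval hlisted fun v hlisted => ?_
  have hv := isBooleanEval_tautEval v
  obtain ⟨C, hC, hpalette⟩ := hv.exists_paletteFormula e k
  have hbit := hv.imp.1 (hv.conj.1 hlisted C hC) hpalette
  exact hv.admissible.2 ⟨C, hC, (hv.literal.1 hbit).2 hv.top, hpalette⟩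

theorem guard_mem (hclause : ∀ a, clause own a ∈ Θ) (hk : k ≤ n) : guard e own D k ∈ Θ := by
  induction k with
  | zero => exact hΘ.top_mem
  | succ k ih =>
    refine hΘ.nec e (hΘ.and_mem (hΘ.and_mem (hD.admissible_mem hΘ hk)
      (hΘ.conj_mem fun a _ => hclause a)) (hΘ.conj_mem fun o _ => ?_))
    rw [boxOf]
    rcases own o with _ | m
    · exact hΘ.top_mem
    · exact hΘ.nec m (ih (k.le_succ.trans hk))

theorem locallyConsistent (hclause : ∀ a, clause own a ∈ Θ) (hL : L ⊆ Θ) :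
    LocallyConsistent e own L D n := by
  intro k hk C hC hbit hmem
  refine (hD k hk C hC).1 hbit ?_
  exact hΘ.mem_of_tautEval (hΘ.and_mem (hL hmem) (hD.guard_mem hΘ hclause hk))
    fun v ⟨hneg, hguard⟩ hpalette => hneg ⟨hpalette, hguard⟩

theorem globallyConsistent (hclause : ∀ a, clause own a ∈ Θ) (hL : L ⊆ Θ) :
    GloballyConsistent e own L D n := by
  intro C hC hbit h
  refine (hD n le_rfl C hC).1 hbit (hΘ.mem_of_PGlobal hL ?_ h)
  exact hΘ.and_mem (hD.admissible_mem hΘ le_rfl) (hΘ.conj_mem fun a _ => hclause a)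

theorem testBit_pair_zero_one {φ : PF K} (hφ : φ ∉ Θ) : D.testBit (Nat.pair 0 1) = true := by
  refine (hD 0 n.zero_le 1 (by norm_num)).2 fun hmem => hφ ?_
  refine hΘ.mem_of_tautEval (hΘ.and_mem hmem (hΘ.refl (neg top))) fun v ⟨hneg, hrefl⟩ => ?_
  have hv := isBooleanEval_tautEval v
  refine absurd (hv.paletteFormula.2 fun T hT => ?_) hneg
  obtain rfl : T = 0 := by simpa using hT
  exact iff_of_true rfl fun hbox => hv.imp.1 hrefl hbox hv.top

theorem testBit_of_occurs (hN : N < n) (hatom : atom N ∈ Θ) (hT : Occurs D n T) :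
    T.testBit N = true := by
  obtain ⟨C, hC, hDC, hT, hCT⟩ := hT
  by_contra hTN
  refine (hD n le_rfl C hC).1 hDC ?_
  have htype : neg (typeFormula n T) ∈ Θ := hΘ.mem_of_tautEval hatom fun v hatom htype =>
    hTN (((isBooleanEval_tautEval v).typeFormula.1 htype N hN).2 hatom)
  refine hΘ.mem_of_tautEval (hΘ.nec e htype) fun v hbox hpalette => ?_
  exact ((isBooleanEval_tautEval v).paletteFormula.1 hpalette T hT).1 hCT hbox

end IsCanonical

end CanonicalPalettes

section CodedColours

open Cardinal PF

/-- The colour of level `k` whose true atoms are the bits of `T`. -/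
def codedColour (k T : ℕ) : ℕ × Set ℕ := (k, {a | a < k ∧ T.testBit a = true})

/-- The set of the colours of level `k` whose codes are the bits of `C`. -/
def codedPalette (k C : ℕ) : Set (ℕ × Set ℕ) :=
  codedColour k '' {T | T < 2 ^ k ∧ C.testBit T = true}

/-- The palettes listed by `D` whose levels lie in `s`. -/
def codedPalettes (D : ℕ) (s : Set ℕ) : Set (Set (ℕ × Set ℕ)) :=
  {S | ∃ k ∈ s, ∃ C < 2 ^ 2 ^ k, D.testBit (Nat.pair k C) = true ∧ codedPalette k C = S}

variable {K : Type} {e : K} {F : KFrame K} {V : ℕ → F.W → Prop} {lev : F.W → ℕ} {x y : F.W}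

theorem colour_eq_codedColour_iff {T : ℕ} :
    colour V lev y = codedColour (lev y) T ↔ PVal V (typeFormula (lev y) T) y := by
  have htype : PVal V (typeFormula (lev y) T) y ↔ ∀ a < lev y, (T.testBit a = true ↔ V a y) :=
    (isBooleanEval_PVal V y).typeFormula
  simp only [htype, colour, codedColour, Prod.mk.injEq, true_and, Set.ext_iff, Set.mem_ofPred_eq,
    and_congr_right_iff]
  exact forall₂_congr fun a _ => Iff.comm

theorem exists_colour_eq_codedColour (V : ℕ → F.W → Prop) (lev : F.W → ℕ) (y : F.W) :
    ∃ T < 2 ^ lev y, colour V lev y = codedColour (lev y) T := by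
  obtain ⟨T, hT, htype⟩ := (isBooleanEval_PVal V y).exists_typeFormula (lev y)
  exact ⟨T, hT, colour_eq_codedColour_iff.2 htype⟩

theorem palette_colour_eq_codedPalette {C : ℕ} (hlev : ∀ y, F.R e x y → lev y = lev x)
    (h : PVal V (paletteFormula e (lev x) C) x) :
    palette (F.R e) (colour V lev) x = codedPalette (lev x) C := by
  have hbit (T) (hT : T < 2 ^ lev x) :
      C.testBit T = true ↔ ∃ y, F.R e x y ∧ colour V lev y = codedColour (lev x) T := by
    rw [(isBooleanEval_PVal V x).paletteFormula.1 h T hT, PVal_dia]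
    refine exists_congr fun y => and_congr_right fun hy => ?_
    rw [← hlev y hy, colour_eq_codedColour_iff]
  refine Set.Subset.antisymm ?_ ?_
  · rintro _ ⟨y, hy, rfl⟩
    obtain ⟨T, hT, hcolour⟩ := exists_colour_eq_codedColour V lev y
    rw [hlev y hy] at hT hcolour
    exact ⟨T, ⟨hT, (hbit T hT).2 ⟨y, hy, hcolour⟩⟩, hcolour.symm⟩
  · rintro _ ⟨T, ⟨hT, hCT⟩, rfl⟩
    exact (hbit T hT).1 hCT

theorem EHomog.isHomogeneous {κ : Cardinal.{0}} (hV : EHomog e V κ)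
    (hlev : ∀ x y, F.R e x y → lev y = lev x) : IsHomogeneous (F.R e) (colour V lev) κ := by
  intro x c
  by_cases hc : c ∈ palette (F.R e) (colour V lev) x
  · obtain ⟨y, hy, rfl⟩ := hc
    obtain ⟨T, -, hcolour⟩ := exists_colour_eq_codedColour V lev y
    have fiber_iff (z : F.W) : F.R e x z ∧ colour V lev z = colour V lev y ↔
        F.R e x z ∧ PVal V (typeFormula (lev x) T) z :=
      and_congr_right fun hz => by
        rw [hcolour, hlev x y hy, ← hlev x z hz, colour_eq_codedColour_iff]
    simp only [fiber_iff]
    exact hV x _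
  · exact .inl (Cardinal.mk_eq_zero_iff.2 ⟨fun ⟨y, hy, hcolour⟩ => hc ⟨y, hy, hcolour⟩⟩)

end CodedColours

section ComponentModels

open PF

variable {K : Type} {F : KFrame K} {V : ℕ → F.W → Prop} {own : ℕ → Option K} {D k : ℕ}

theorem isSurrogateAt_of_PVal_clauses {lev : F.W → ℕ} {x : F.W}
    (h : PVal V (clauses own (lev x)) x)
    (hlev : ∀ o < lev x, ∀ m, own o = some m → ∀ y, F.R m x y → lev x ≤ lev y + 1) :
    IsSurrogateAt own F V lev x := by
  have hx := isBooleanEval_PVal V x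
  have hclause := hx.clauses.1 h
  refine ⟨fun a ha h1 => ?_, fun a ha h2 => ?_, fun a ha h3 m hm => ⟨fun y hy => ?_, ?_⟩⟩
  · have := hclause a ha
    rw [clause, if_neg (by omega), if_pos h1] at this
    exact hx.iff.1 this
  · have := hclause a ha
    rw [clause, if_neg (by omega), if_neg (by omega), if_pos h2] at this
    exact hx.iff.1 this
  · have hleft := left_lt (n := a) (by omega)
    have hright := right_lt (n := a) (by omega)
    have := hlev _ (hleft.trans ha) m hm y hy
    omega
  · have := hclause a ha
    rw [clause, if_neg (by omega), if_neg (by omega), if_neg (by omega), hm] at this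
    exact hx.iff.1 this

variable {e : K}

open Classical in
/-- The largest level at most `k` whose guard holds at `x`. -/
noncomputable def guardLevel (e : K) (own : ℕ → Option K) (D k : ℕ) (V : ℕ → F.W → Prop)
    (x : F.W) : ℕ :=
  Nat.findGreatest (fun j => PVal V (guard e own D j) x) k

theorem guardLevel_le (x : F.W) : guardLevel e own D k V x ≤ k := by
  classical exact Nat.findGreatest_le k

theorem le_guardLevel {j : ℕ} {x : F.W} (hj : j ≤ k) (h : PVal V (guard e own D j) x) :
    j ≤ guardLevel e own D k V x := by
  classical exact Nat.le_findGreatest hj h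

theorem PVal_guard_guardLevel (x : F.W) :
    PVal V (guard e own D (guardLevel e own D k V x)) x := by
  classical
  exact Nat.findGreatest_spec (P := fun j => PVal V (guard e own D j) x) k.zero_le
    (isBooleanEval_PVal V x).top

variable (hE : Equivalence (F.R e))
include hE

theorem PVal_guard_of_rel {j : ℕ} {x y : F.W} (hxy : F.R e x y)
    (h : PVal V (guard e own D j) x) : PVal V (guard e own D j) y := by
  cases j with
  | zero => exact (isBooleanEval_PVal V y).top
  | succ j => exact fun z hyz => h z (hE.trans hxy hyz)

theorem guardLevel_eq_of_rel {x y : F.W} (hxy : F.R e x y) :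
    guardLevel e own D k V y = guardLevel e own D k V x :=
  le_antisymm
    (le_guardLevel (guardLevel_le y) (PVal_guard_of_rel hE (hE.symm hxy) (PVal_guard_guardLevel y)))
    (le_guardLevel (guardLevel_le x) (PVal_guard_of_rel hE hxy (PVal_guard_guardLevel x)))

theorem PVal_guard_succ {j : ℕ} {x : F.W} (h : PVal V (guard e own D (j + 1)) x) :
    PVal V (admissible e D (j + 1)) x ∧ PVal V (clauses own (j + 1)) x ∧
      ∀ o < j + 1, ∀ m, own o = some m → ∀ y, F.R m x y → PVal V (guard e own D j) y := by
  obtain ⟨⟨hadm, hclauses⟩, hboxes⟩ := h x (hE.refl x)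
  refine ⟨hadm, hclauses, fun o ho m hm => ?_⟩
  have := (isBooleanEval_PVal V x).conj.1 hboxes o ho
  rwa [boxOf, hm] at this

theorem isSurrogateAt_guardLevel (x : F.W) :
    IsSurrogateAt own F V (guardLevel e own D k V) x := by
  rcases hx : guardLevel e own D k V x with _ | j
  · exact isSurrogateAt_of_PVal_clauses (hx ▸ (isBooleanEval_PVal V x).top)
      fun o ho => absurd ho (hx ▸ o.not_lt_zero)
  · obtain ⟨-, hclauses, hboxes⟩ := PVal_guard_succ hE (hx ▸ PVal_guard_guardLevel x)
    refine isSurrogateAt_of_PVal_clauses (hx ▸ hclauses) fun o ho m hm y hy => ?_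
    rw [hx] at ho ⊢
    have hj : j ≤ k := (Nat.le_succ j).trans (hx.symm.trans_le (guardLevel_le x))
    exact Nat.succ_le_succ (le_guardLevel hj (hboxes o ho m hm y hy))

theorem palette_guardLevel_mem_codedPalettes (hD : D.testBit (Nat.pair 0 1) = true) (x : F.W) :
    palette (F.R e) (colour V (guardLevel e own D k V)) x ∈ codedPalettes D (Set.Iic k) := by
  have hlev (y) : F.R e x y → guardLevel e own D k V y = guardLevel e own D k V x :=
    guardLevel_eq_of_rel hE
  rcases hx : guardLevel e own D k V x with _ | j
  · refine ⟨0, k.zero_le, 1, by norm_num, hD, ?_⟩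
    rw [← hx]
    refine (palette_colour_eq_codedPalette hlev ?_).symm
    rw [hx]
    refine (isBooleanEval_PVal V x).paletteFormula.2 fun T hT => ?_
    obtain rfl : T = 0 := by simpa using hT
    exact iff_of_true rfl (PVal_dia.2 ⟨x, hE.refl x, (isBooleanEval_PVal V x).top⟩)
  · obtain ⟨hadm, -, -⟩ := PVal_guard_succ hE (hx ▸ PVal_guard_guardLevel x)
    obtain ⟨C, hC, hDC, hpalette⟩ := (isBooleanEval_PVal V x).admissible.1 hadm
    rw [← hx] at hC hDC hpalette
    exact ⟨_, guardLevel_le x, C, hC, hDC, (palette_colour_eq_codedPalette hlev hpalette).symm⟩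

end ComponentModels

section Realization

open PF

variable {K : Type} {e : K} {L : Set (PF K)} {own : ℕ → Option K} {κ : Cardinal.{0}} {D n : ℕ}

theorem LocallyConsistent.exists_surrogateModel (h : LocallyConsistent e own L D n)
    (hS : ContainsS5 L e)
    (hL : ∀ φ ∉ L, ∃ F : KFrame K, FrameFor F L ∧
      ∃ V : ℕ → F.W → Prop, EHomog e V κ ∧ ∃ w, ¬ PVal V φ w)
    (hD : D.testBit (Nat.pair 0 1) = true) :
    ∀ S ∈ codedPalettes D (Set.Iic n), ∃ 𝔐 : SurrogateModel e L own κ,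
      S ∈ 𝔐.palettes ∧ 𝔐.palettes ⊆ codedPalettes D (Set.Iic n) := by
  rintro _ ⟨k, hk, C, hC, hDC, rfl⟩
  obtain ⟨F, hF, V, hV, w, hw⟩ := hL _ (h k hk C hC hDC)
  have hE := hF.equivalence hS
  obtain ⟨hpalette, hguard⟩ := not_not.1 hw
  have hwk : guardLevel e own D k V w = k :=
    (guardLevel_le w).antisymm (le_guardLevel le_rfl hguard)
  let 𝔐 : SurrogateModel e L own κ :=
    { F, V, lev := guardLevel e own D k V, frameFor := hF
      isSurrogateAt := isSurrogateAt_guardLevel hE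
      isHomogeneous := hV.isHomogeneous fun _ _ => guardLevel_eq_of_rel hE }
  refine ⟨𝔐, ⟨w, ?_⟩, ?_⟩
  · exact (palette_colour_eq_codedPalette (fun y => guardLevel_eq_of_rel hE)
      (by rwa [hwk])).trans (by rw [hwk])
  · rintro _ ⟨x, rfl⟩
    obtain ⟨j, hj, hS⟩ := palette_guardLevel_mem_codedPalettes hE hD x
    exact ⟨j, Set.mem_Iic.2 (hj.trans hk), hS⟩

theorem GloballyConsistent.exists_surrogateModel (h : GloballyConsistent e own L D n)
    (hL : ∀ φ ψ, ¬ PGlobal L φ ψ → ∃ F : KFrame K, FrameFor F L ∧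
      ∃ V : ℕ → F.W → Prop, EHomog e V κ ∧ (∀ w, PVal V φ w) ∧ ∃ w, ¬ PVal V ψ w) :
    ∀ S ∈ codedPalettes D {n}, ∃ 𝔐 : SurrogateModel e L own κ,
      S ∈ 𝔐.palettes ∧ 𝔐.palettes ⊆ codedPalettes D {n} := by
  rintro _ ⟨k, hk, C, hC, hDC, rfl⟩
  obtain rfl : n = k := hk.symm
  obtain ⟨F, hF, V, hV, hφ, w, hw⟩ := hL _ _ (h C hC hDC)
  have palette_eq {x : F.W} {C : ℕ} (hpalette : PVal V (paletteFormula e n C) x) :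
      palette (F.R e) (colour V fun _ => n) x = codedPalette n C :=
    palette_colour_eq_codedPalette (lev := fun _ => n) (fun _ _ => rfl) hpalette
  let 𝔐 : SurrogateModel e L own κ :=
    { F, V, lev := fun _ => n, frameFor := hF
      isSurrogateAt := fun x => isSurrogateAt_of_PVal_clauses (hφ x).2
        fun _ _ _ _ _ _ => n.le_succ
      isHomogeneous := hV.isHomogeneous fun _ _ _ => rfl }
  refine ⟨𝔐, ⟨w, palette_eq (not_not.1 hw)⟩, ?_⟩
  rintro _ ⟨x, rfl⟩
  obtain ⟨C, hC, hDC, hpalette⟩ := (isBooleanEval_PVal V x).admissible.1 (hφ x).1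
  exact ⟨n, rfl, C, hC, hDC, (palette_eq hpalette).symm⟩

end Realization

section Criteria

open PF

variable {M1 M2 : Type}

theorem map_inl_of_restrictLeft_eq_some {m : Option (M1 ⊕ M2)} {m₁ : Option M1}
    (h : restrictLeft m = some m₁) : m₁.map Sum.inl = m := by
  obtain _ | m | m := m <;> cases h <;> rfl

theorem map_inr_of_restrictRight_eq_some {m : Option (M1 ⊕ M2)} {m₂ : Option M2}
    (h : restrictRight m = some m₂) : m₂.map Sum.inr = m := by
  obtain _ | m | m := m <;> cases h <;> rfl

variable {L1 : Set (PF (Option M1))} {L2 : Set (PF (Option M2))}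

theorem subset_preimage_fusionE_left (σ : ℕ → PF (Option (M1 ⊕ M2))) :
    L1 ⊆ mapOp (Option.map Sum.inl) ⁻¹' (substP σ ⁻¹' fusionE L1 L2) :=
  fun _ hφ _ hL => hL.1.subst σ _ (hL.2.1 ⟨_, hφ, rfl⟩)

theorem subset_preimage_fusionE_right (σ : ℕ → PF (Option (M1 ⊕ M2))) :
    L2 ⊆ mapOp (Option.map Sum.inr) ⁻¹' (substP σ ⁻¹' fusionE L1 L2) :=
  fun _ hφ _ hL => hL.1.subst σ _ (hL.2.2 ⟨_, hφ, rfl⟩)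

theorem sUnion_codedPalettes (D : ℕ) (s : Set ℕ) :
    ⋃₀ codedPalettes D s = {c | ∃ k ∈ s, ∃ T, Occurs D k T ∧ codedColour k T = c} := by
  ext c
  constructor
  · rintro ⟨_, ⟨k, hk, C, hC, hDC, rfl⟩, T, ⟨hT, hCT⟩, rfl⟩
    exact ⟨k, hk, T, ⟨C, hC, hDC, hT, hCT⟩, rfl⟩
  · rintro ⟨k, hk, T, ⟨C, hC, hDC, hT, hCT⟩, rfl⟩
    exact ⟨_, ⟨k, hk, C, hC, hDC, rfl⟩, T, ⟨hT, hCT⟩, rfl⟩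

theorem Occurs.codedPalettes_nonempty {D k T : ℕ} {s : Set ℕ} (h : Occurs D k T) (hk : k ∈ s) :
    (codedPalettes D s).Nonempty := by
  obtain ⟨C, hC, hDC, -, -⟩ := h
  exact ⟨_, k, hk, C, hC, hDC, rfl⟩

variable {κ : Cardinal.{0}} {D N N1 N2 n : ℕ} {s : Set ℕ}

theorem SurrogateModel.sUnion_palettes {K : Type} {e : K} {L : Set (PF K)} {own : ℕ → Option K}
    (hS : ContainsS5 L e) (𝔐 : SurrogateModel e L own κ) :
    ⋃₀ 𝔐.palettes = Set.range (colour 𝔐.V 𝔐.lev) := by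
  refine Set.Subset.antisymm ?_ ?_
  · rintro _ ⟨_, ⟨x, rfl⟩, y, -, rfl⟩
    exact ⟨y, rfl⟩
  · rintro _ ⟨x, rfl⟩
    exact ⟨_, ⟨x, rfl⟩, x, (𝔐.frameFor.equivalence hS).refl x, rfl⟩

variable [Encodable M1] [Encodable M2]

theorem exists_model_of_codedPalettes (hS1 : ContainsS5 L1 none) (hS2 : ContainsS5 L2 none)
    (hD : (codedPalettes D s).Nonempty)
    (h1 : ∀ S ∈ codedPalettes D s, ∃ 𝔐 : SurrogateModel none L1 (ownLeft M1 M2) κ,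
      S ∈ 𝔐.palettes ∧ 𝔐.palettes ⊆ codedPalettes D s)
    (h2 : ∀ S ∈ codedPalettes D s, ∃ 𝔐 : SurrogateModel none L2 (ownRight M1 M2) κ,
      S ∈ 𝔐.palettes ∧ 𝔐.palettes ⊆ codedPalettes D s) :
    ∃ F : KFrame (Option (M1 ⊕ M2)), FrameFor F (fusionE L1 L2) ∧ ∃ V : ℕ → F.W → Prop,
      (∀ z, ∃ k ∈ s, ∃ T, Occurs D k T ∧ ∀ a < k, (PVal V (form a) z ↔ T.testBit a = true)) ∧
      ∀ k ∈ s, ∀ T, Occurs D k T → ∃ z, ∀ a < k, (PVal V (form a) z ↔ T.testBit a = true) := by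
  obtain ⟨𝔐₁, h𝔐₁⟩ := SurrogateModel.exists_palettes_eq hD h1
  obtain ⟨𝔐₂, h𝔐₂⟩ := SurrogateModel.exists_palettes_eq hD h2
  obtain ⟨F, hF, V, π, hπ, hV⟩ :=
    SurrogateModel.exists_fusion_model hS1 hS2 𝔐₁ 𝔐₂ (h𝔐₁.trans h𝔐₂.symm)
  have colours : Set.range (colour 𝔐₁.V 𝔐₁.lev) =
      {c | ∃ k ∈ s, ∃ T, Occurs D k T ∧ codedColour k T = c} := by
    rw [← 𝔐₁.sUnion_palettes hS1, h𝔐₁, sUnion_codedPalettes]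
  have form_iff {z k T} (h : codedColour k T = colour 𝔐₁.V 𝔐₁.lev (π z)) :
      ∀ a < k, (PVal V (form a) z ↔ T.testBit a = true) := by
    obtain ⟨rfl, hatoms⟩ := Prod.mk.inj h
    intro a ha
    rw [hV z a ha]
    simpa only [Set.mem_ofPred_eq, ha, true_and] using (Set.ext_iff.1 hatoms a).symm
  refine ⟨F, hF, V, fun z => ?_, fun k hk T hT => ?_⟩
  · obtain ⟨k, hk, T, hT, h⟩ := colours.subset ⟨π z, rfl⟩
    exact ⟨k, hk, T, hT, form_iff h⟩
  · obtain ⟨x, hx⟩ := colours.superset ⟨k, hk, T, hT, rfl⟩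
    obtain ⟨z, rfl⟩ := hπ x
    exact ⟨z, form_iff hx.symm⟩

/-- `D` describes a model of the fusion that refutes the formula with code `N`. -/
structure LocalWitness (L1 : Set (PF (Option M1))) (L2 : Set (PF (Option M2))) (N D : ℕ) :
    Prop where
  testBit_pair_zero_one : D.testBit (Nat.pair 0 1) = true
  left : LocallyConsistent none (ownLeft M1 M2) L1 D (N + 1)
  right : LocallyConsistent none (ownRight M1 M2) L2 D (N + 1)
  exists_occurs : ∃ T, Occurs D (N + 1) T ∧ ¬ T.testBit N = true

/-- `D` describes, at level `n`, a model of the fusion in which the formula with code `N1` is true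
everywhere and the formula with code `N2` is not. -/
structure GlobalWitness (L1 : Set (PF (Option M1))) (L2 : Set (PF (Option M2))) (N1 N2 n D : ℕ) :
    Prop where
  left : GloballyConsistent none (ownLeft M1 M2) L1 D n
  right : GloballyConsistent none (ownRight M1 M2) L2 D n
  testBit_of_occurs : ∀ T, Occurs D n T → T.testBit N1 = true
  exists_occurs : ∃ T, Occurs D n T ∧ ¬ T.testBit N2 = true

theorem exists_localWitness (hS1 : ContainsS5 L1 none) (h : form N ∉ fusionE L1 L2) :
    ∃ D < 2 ^ bitBound (N + 1), LocalWitness L1 L2 N D := by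
  have hfusion := isTheory_fusionE (L2 := L2) hS1
  have hΘ := hfusion.preimage_substP form
  obtain ⟨D, hDlt, hD⟩ := exists_isCanonical none (substP form ⁻¹' fusionE L1 L2) (N + 1)
  refine ⟨D, hDlt, hD.testBit_pair_zero_one hΘ (φ := atom N) h, ?_, ?_,
    hΘ.exists_occurs N.lt_succ_self (hD.admissible_mem hΘ le_rfl) h⟩
  · have hD' := IsCanonical.preimage_mapOp (f := Option.map Sum.inl) (e := none) hD
    exact hD'.locallyConsistent hΘ.preimage_mapOp
      (hfusion.clause_mem fun _ _ => map_inl_of_restrictLeft_eq_some)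
      (subset_preimage_fusionE_left form)
  · have hD' := IsCanonical.preimage_mapOp (f := Option.map Sum.inr) (e := none) hD
    exact hD'.locallyConsistent hΘ.preimage_mapOp
      (hfusion.clause_mem fun _ _ => map_inr_of_restrictRight_eq_some)
      (subset_preimage_fusionE_right form)

theorem exists_globalWitness (hS1 : ContainsS5 L1 none) (hN1 : N1 < n) (hN2 : N2 < n)
    (h : ¬ PGlobal (fusionE L1 L2) (form N1) (form N2)) :
    ∃ D < 2 ^ bitBound n, GlobalWitness L1 L2 N1 N2 n D := by
  have hglobal := (isTheory_fusionE (L2 := L2) hS1).setOf_PGlobal (form N1)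
  have hΘ := hglobal.preimage_substP form
  have hsub : fusionE L1 L2 ⊆ {ψ | PGlobal (fusionE L1 L2) (form N1) ψ} := fun _ => .ax
  obtain ⟨D, hDlt, hD⟩ :=
    exists_isCanonical none (substP form ⁻¹' {ψ | PGlobal (fusionE L1 L2) (form N1) ψ}) n
  refine ⟨D, hDlt, ?_, ?_, fun T => hD.testBit_of_occurs hΘ hN1 .prem,
    hΘ.exists_occurs hN2 (hD.admissible_mem hΘ le_rfl) h⟩
  · have hD' := IsCanonical.preimage_mapOp (f := Option.map Sum.inl) (e := none) hD
    exact hD'.globallyConsistent hΘ.preimage_mapOp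
      (hglobal.clause_mem fun _ _ => map_inl_of_restrictLeft_eq_some)
      fun _ hφ => hsub (subset_preimage_fusionE_left form hφ)
  · have hD' := IsCanonical.preimage_mapOp (f := Option.map Sum.inr) (e := none) hD
    exact hD'.globallyConsistent hΘ.preimage_mapOp
      (hglobal.clause_mem fun _ _ => map_inr_of_restrictRight_eq_some)
      fun _ hφ => hsub (subset_preimage_fusionE_right form hφ)

theorem LocalWitness.exists_model (hS1 : ContainsS5 L1 none) (hS2 : ContainsS5 L2 none)
    (hA1 : AdmitsEHomog none L1) (hA2 : AdmitsEHomog none L2) (h : LocalWitness L1 L2 N D) :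
    ∃ F : KFrame (Option (M1 ⊕ M2)), FrameFor F (fusionE L1 L2) ∧
      ∃ (V : ℕ → F.W → Prop) (z : F.W), ¬ PVal V (form N) z := by
  obtain ⟨κ₁, -, hκ₁⟩ := hA1
  obtain ⟨κ₂, -, hκ₂⟩ := hA2
  obtain ⟨T, hT, hTN⟩ := h.exists_occurs
  have hlevel : N + 1 ∈ Set.Iic (N + 1) := Set.mem_Iic.2 le_rfl
  obtain ⟨F, hF, V, -, hV⟩ := exists_model_of_codedPalettes (κ := max κ₁ κ₂) hS1 hS2
    (hT.codedPalettes_nonempty hlevel)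
    (h.left.exists_surrogateModel hS1 (hκ₁ _ (le_max_left _ _)) h.testBit_pair_zero_one)
    (h.right.exists_surrogateModel hS2 (hκ₂ _ (le_max_right _ _)) h.testBit_pair_zero_one)
  obtain ⟨z, hz⟩ := hV _ hlevel T hT
  exact ⟨F, hF, V, z, mt (hz N N.lt_succ_self).1 hTN⟩

theorem GlobalWitness.exists_model (hS1 : ContainsS5 L1 none) (hS2 : ContainsS5 L2 none)
    (hA1 : AdmitsEHomogGlobal none L1) (hA2 : AdmitsEHomogGlobal none L2) (hN1 : N1 < n)
    (hN2 : N2 < n) (h : GlobalWitness L1 L2 N1 N2 n D) :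
    ∃ F : KFrame (Option (M1 ⊕ M2)), FrameFor F (fusionE L1 L2) ∧
      ∃ V : ℕ → F.W → Prop, (∀ z, PVal V (form N1) z) ∧ ∃ z, ¬ PVal V (form N2) z := by
  obtain ⟨κ₁, -, hκ₁⟩ := hA1
  obtain ⟨κ₂, -, hκ₂⟩ := hA2
  obtain ⟨T, hT, hTN2⟩ := h.exists_occurs
  have hlevel : n ∈ ({n} : Set ℕ) := rfl
  obtain ⟨F, hF, V, hall, hex⟩ := exists_model_of_codedPalettes (κ := max κ₁ κ₂) hS1 hS2
    (hT.codedPalettes_nonempty hlevel)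
    (h.left.exists_surrogateModel (hκ₁ _ (le_max_left _ _)))
    (h.right.exists_surrogateModel (hκ₂ _ (le_max_right _ _)))
  refine ⟨F, hF, V, fun z => ?_, ?_⟩
  · obtain ⟨k, hk, T, hT, hz⟩ := hall z
    rw [Set.mem_singleton_iff.1 hk] at hT hz
    exact (hz N1 hN1).2 (h.testBit_of_occurs T hT)
  · obtain ⟨z, hz⟩ := hex n hlevel T hT
    exact ⟨z, mt (hz N2 hN2).1 hTN2⟩

variable (hS1 : ContainsS5 L1 none) (hS2 : ContainsS5 L2 none)
include hS1 hS2

theorem kComplete_fusionE (hA1 : AdmitsEHomog none L1) (hA2 : AdmitsEHomog none L2) :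
    KComplete (fusionE L1 L2) := by
  intro φ hφ
  by_contra hmem
  obtain ⟨N, rfl⟩ := form_surjective φ
  obtain ⟨D, -, hD⟩ := exists_localWitness hS1 hmem
  obtain ⟨F, hF, V, z, hz⟩ := hD.exists_model hS1 hS2 hA1 hA2
  exact hz (hφ F hF V z)

theorem globallyKComplete_fusionE (hA1 : AdmitsEHomogGlobal none L1)
    (hA2 : AdmitsEHomogGlobal none L2) : GloballyKComplete (fusionE L1 L2) := by
  refine fun φ ψ => ⟨fun h F hF V hV => h.sound hF hV, fun h => ?_⟩
  by_contra hglobal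
  obtain ⟨N1, rfl⟩ := form_surjective φ
  obtain ⟨N2, rfl⟩ := form_surjective ψ
  have hN1 : N1 < N1 + N2 + 1 := by omega
  have hN2 : N2 < N1 + N2 + 1 := by omega
  obtain ⟨D, -, hD⟩ := exists_globalWitness hS1 hN1 hN2 hglobal
  obtain ⟨F, hF, V, hV, z, hz⟩ := hD.exists_model hS1 hS2 hA1 hA2 hN1 hN2
  exact hz (h F hF V hV z)

theorem form_mem_fusionE_iff (hA1 : AdmitsEHomog none L1) (hA2 : AdmitsEHomog none L2) :
    form N ∈ fusionE L1 L2 ↔ ¬ ∃ D < 2 ^ bitBound (N + 1), LocalWitness L1 L2 N D := by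
  refine ⟨?_, not_imp_comm.1 (exists_localWitness hS1)⟩
  rintro h ⟨D, -, hD⟩
  obtain ⟨F, hF, V, z, hz⟩ := hD.exists_model hS1 hS2 hA1 hA2
  exact hz (hF _ h V z)

theorem pGlobal_fusionE_form_iff (hA1 : AdmitsEHomogGlobal none L1)
    (hA2 : AdmitsEHomogGlobal none L2) (hN1 : N1 < n) (hN2 : N2 < n) :
    PGlobal (fusionE L1 L2) (form N1) (form N2) ↔
      ¬ ∃ D < 2 ^ bitBound n, GlobalWitness L1 L2 N1 N2 n D := by
  refine ⟨?_, not_imp_comm.1 (exists_globalWitness hS1 hN1 hN2)⟩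
  rintro h ⟨D, -, hD⟩
  obtain ⟨F, hF, V, hV, z, hz⟩ := hD.exists_model hS1 hS2 hA1 hA2 hN1 hN2
  exact hz (h.sound hF hV z)

end Criteria

section ComputablePredicates

variable {α β : Type*} [Primcodable α] [Primcodable β] {p q : α → Prop}

theorem computablePred_comp {f : β → α} (hp : ComputablePred p) (hf : Computable f) :
    ComputablePred fun b => p (f b) := by
  obtain ⟨_, hp⟩ := hp
  exact Computable.computablePred (hp.comp hf)

theorem computablePred_and (hp : ComputablePred p) (hq : ComputablePred q) :
    ComputablePred fun a => p a ∧ q a := by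
  obtain ⟨f, hf, rfl⟩ := ComputablePred.computable_iff.1 hp
  obtain ⟨g, hg, rfl⟩ := ComputablePred.computable_iff.1 hq
  exact ComputablePred.computable_iff.2
    ⟨_, Primrec.and.to_comp.comp hf hg, funext fun a => by rw [Bool.and_eq_true]⟩

theorem computablePred_imp (hp : ComputablePred p) (hq : ComputablePred q) :
    ComputablePred fun a => p a → q a :=
  (computablePred_and hp hq.not).not.of_eq fun _ => by rw [not_and_not_right]

theorem computablePred_forall_lt {p : α × ℕ → Prop} {b : α → ℕ} (hb : Primrec b)
    (hp : ComputablePred p) : ComputablePred fun a => ∀ i < b a, p (a, i) := by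
  obtain ⟨f, hf, rfl⟩ := ComputablePred.computable_iff.1 hp
  have hstep : Computable₂ fun (a : α) (x : ℕ × Bool) => x.2 && f (a, x.1) :=
    Primrec.and.to_comp.comp (Computable.snd.comp Computable.snd)
      (hf.comp (Computable.fst.pair (Computable.fst.comp Computable.snd)))
  refine ComputablePred.computable_iff.2
    ⟨_, Computable.nat_rec hb.to_comp (Computable.const true) hstep, funext fun a => ?_⟩
  dsimp only
  induction b a with
  | zero => exact propext ⟨fun _ => rfl, fun _ i hi => absurd hi (Nat.not_lt_zero i)⟩
  | succ n ih => rw [Nat.forall_lt_succ_right, ih, Bool.and_eq_true]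

theorem computablePred_exists_lt {p : α × ℕ → Prop} {b : α → ℕ} (hb : Primrec b)
    (hp : ComputablePred p) : ComputablePred fun a => ∃ i < b a, p (a, i) :=
  (computablePred_forall_lt hb hp.not).not.of_eq fun _ => by
    push Not
    rfl

theorem primrec_two_pow : Primrec fun n : ℕ => 2 ^ n :=
  (Primrec₂.unpaired'.1 Nat.Primrec.pow).comp (Primrec.const 2) Primrec.id

theorem primrec_testBit : Primrec₂ Nat.testBit := by
  have h : PrimrecPred fun p : ℕ × ℕ => p.1 / 2 ^ p.2 % 2 = 1 :=
    Primrec.eq.comp (Primrec.nat_mod.comp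
      (Primrec.nat_div.comp Primrec.fst (primrec_two_pow.comp Primrec.snd)) (Primrec.const 2))
      (Primrec.const 1)
  exact h.decide.of_eq fun _ => Nat.testBit_eq_decide_div_mod_eq.symm

theorem computablePred_testBit {f g : α → ℕ} (hf : Primrec f) (hg : Primrec g) :
    ComputablePred fun a => (f a).testBit (g a) = true :=
  ComputablePred.computable_iff.2 ⟨_, (primrec_testBit.comp hf hg).to_comp, rfl⟩

end ComputablePredicates

section PrimrecFormulas

namespace PF

theorem primrec_tag : Primrec tag := Primrec.fst.comp Primrec.unpair

theorem primrec_body : Primrec body := Primrec.snd.comp Primrec.unpair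

theorem primrec_left : Primrec left := Primrec.fst.comp (Primrec.unpair.comp primrec_body)

theorem primrec_right : Primrec right := Primrec.snd.comp (Primrec.unpair.comp primrec_body)

variable {M : Type} [Primcodable M] [Inhabited M]

theorem primrec_operator : Primrec (operator M) :=
  Primrec.option_getD_default.comp Primrec.decode

variable (M) in
/-- The course-of-values step computing the Gödel number of `form n` from those of the formulas
`form i` with `i < n`, given as the list `l` of length `n`. -/
def normalizeStep (l : List ℕ) : ℕ :=
  let n := l.length
  if tag n = 0 then n
  else if tag n = 1 then Nat.pair 1 (l.getD (body n) 0)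
  else if tag n = 2 then Nat.pair 2 (Nat.pair (l.getD (left n) 0) (l.getD (right n) 0))
  else Nat.pair 3 (Nat.pair (Encodable.encode (operator M (left n))) (l.getD (right n) 0))

theorem normalizeStep_eq (n : ℕ) :
    normalizeStep M ((List.range n).map fun i => encode Encodable.encode (form i : PF M)) =
      encode Encodable.encode (form n : PF M) := by
  have getD_eq {i : ℕ} (hi : i < n) :
      ((List.range n).map fun i => encode Encodable.encode (form i : PF M)).getD i 0 =
        encode Encodable.encode (form i : PF M) := by
    simp only [List.getD_eq_getElem?_getD, List.getElem?_map, List.getElem?_range hi,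
      Option.map_some, Option.getD_some]
  simp only [normalizeStep, List.length_map, List.length_range]
  split_ifs with h0 h1 h2
  · rw [form_atom h0, encode, ← h0]
    exact (Nat.pair_unpair n).symm
  · rw [getD_eq (body_lt h0), form_neg h1, encode]
  · rw [getD_eq (left_lt h0), getD_eq (right_lt h0), form_and h2, encode]
  · rw [getD_eq (right_lt h0), form_box (n := n) (by omega), encode]

theorem primrec_normalizeStep : Primrec (normalizeStep M) := by
  have tag_eq (t : ℕ) : PrimrecPred fun l : List ℕ => tag l.length = t :=
    Primrec.eq.comp (primrec_tag.comp Primrec.list_length) (Primrec.const t)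
  have getD {f : ℕ → ℕ} (hf : Primrec f) : Primrec fun l : List ℕ => l.getD (f l.length) 0 :=
    (Primrec.list_getD 0).comp Primrec.id (hf.comp Primrec.list_length)
  have pair {f g : List ℕ → ℕ} (hf : Primrec f) (hg : Primrec g) :
      Primrec fun l => Nat.pair (f l) (g l) := Primrec₂.natPair.comp hf hg
  exact Primrec.ite (tag_eq 0) Primrec.list_length <|
    Primrec.ite (tag_eq 1) (pair (Primrec.const 1) (getD primrec_body)) <|
    Primrec.ite (tag_eq 2)
      (pair (Primrec.const 2) (pair (getD primrec_left) (getD primrec_right))) <|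
    pair (Primrec.const 3) <| pair
      (Primrec.encode.comp (primrec_operator.comp (primrec_left.comp Primrec.list_length)))
      (getD primrec_right)

theorem primrec_encode_form :
    Primrec fun n => encode Encodable.encode (form n : PF M) :=
  (Primrec.nat_strong_rec (fun (_ : Unit) n => encode Encodable.encode (form n : PF M))
    (Primrec.option_some.comp (primrec_normalizeStep.comp Primrec.snd)).to₂
    fun _ n => congrArg some (normalizeStep_eq n)).comp (Primrec.const ()) Primrec.id

theorem primrecPred_encode_form_eq :
    PrimrecPred fun n => encode Encodable.encode (form n : PF M) = n :=
  Primrec.eq.comp primrec_encode_form Primrec.id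

/-- The Gödel numbering makes formulas a primitively recursively encoded type. -/
instance : Primcodable (PF M) where
  encode := encode Encodable.encode
  decode n := some (form n)
  encodek φ := congrArg some (form_encode φ)
  prim := Primrec.nat_iff.1 (Primrec.succ.comp primrec_encode_form)

theorem primrec_form : Primrec (form : ℕ → PF M) := Primrec.encode_iff.1 primrec_encode_form

theorem primrec_atom : Primrec (atom : ℕ → PF M) :=
  Primrec.encode_iff.1 (Primrec₂.natPair.comp (Primrec.const 0) Primrec.id)

theorem primrec_neg : Primrec (neg : PF M → PF M) :=
  Primrec.encode_iff.1 (Primrec₂.natPair.comp (Primrec.const 1) Primrec.encode)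

theorem primrec_and : Primrec₂ (and : PF M → PF M → PF M) :=
  Primrec.encode_iff.1 <| Primrec₂.natPair.comp (Primrec.const 2) <|
    Primrec₂.natPair.comp (Primrec.encode.comp Primrec.fst) (Primrec.encode.comp Primrec.snd)

theorem primrec_box : Primrec₂ (box : M → PF M → PF M) :=
  Primrec.encode_iff.1 <| Primrec₂.natPair.comp (Primrec.const 3) <|
    Primrec₂.natPair.comp (Primrec.encode.comp Primrec.fst) (Primrec.encode.comp Primrec.snd)

variable {α : Type*} [Primcodable α]

theorem primrec_imp : Primrec₂ (imp : PF M → PF M → PF M) :=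
  primrec_neg.comp (primrec_and.comp Primrec.fst (primrec_neg.comp Primrec.snd))

theorem primrec_iff : Primrec₂ (iff : PF M → PF M → PF M) :=
  primrec_and.comp primrec_imp (primrec_imp.comp Primrec.snd Primrec.fst)

theorem primrec_conj {f : α → ℕ → PF M} {n : α → ℕ} (hf : Primrec₂ f) (hn : Primrec n) :
    Primrec fun a => conj (f a) (n a) := by
  refine (Primrec.nat_rec' hn (Primrec.const top) (h := fun a x => and x.2 (f a x.1))
    (primrec_and.comp (Primrec.snd.comp Primrec.snd)
      (hf.comp Primrec.fst (Primrec.fst.comp Primrec.snd)))).of_eq fun a => ?_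
  induction n a with
  | zero => rfl
  | succ n ih => rw [conj, ← ih]

theorem primrec_disj {f : α → ℕ → PF M} {n : α → ℕ} (hf : Primrec₂ f) (hn : Primrec n) :
    Primrec fun a => disj (f a) (n a) :=
  primrec_neg.comp (primrec_conj (primrec_neg.comp hf) hn)

theorem primrec_literal : Primrec₂ (literal : Bool → PF M → PF M) :=
  Primrec.cond Primrec.fst Primrec.snd (primrec_neg.comp Primrec.snd)

theorem primrec_dia (e : M) : Primrec (dia e) :=
  primrec_neg.comp (primrec_box.comp (Primrec.const e) primrec_neg)

theorem primrec_typeFormula : Primrec₂ (typeFormula : ℕ → ℕ → PF M) :=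
  primrec_conj (primrec_literal.comp
    (primrec_testBit.comp (Primrec.snd.comp Primrec.fst) Primrec.snd)
    (primrec_atom.comp Primrec.snd)) Primrec.fst

theorem primrec_paletteFormula (e : M) : Primrec₂ (paletteFormula e) :=
  primrec_conj (primrec_literal.comp
    (primrec_testBit.comp (Primrec.snd.comp Primrec.fst) Primrec.snd)
    ((primrec_dia e).comp (primrec_typeFormula.comp (Primrec.fst.comp Primrec.fst) Primrec.snd)))
    (primrec_two_pow.comp Primrec.fst)

theorem primrec_admissible (e : M) : Primrec₂ (admissible e) := by
  have level : Primrec fun x : (ℕ × ℕ) × ℕ => x.1.2 := Primrec.snd.comp Primrec.fst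
  exact primrec_disj (primrec_and.comp
    (primrec_literal.comp (primrec_testBit.comp (Primrec.fst.comp Primrec.fst)
      (Primrec₂.natPair.comp level Primrec.snd)) (Primrec.const top))
    ((primrec_paletteFormula e).comp level Primrec.snd))
    (primrec_two_pow.comp (primrec_two_pow.comp Primrec.snd))

theorem primrec_elim {o : α → Option M} {φ : α → PF M} {f : α → M → PF M} (ho : Primrec o)
    (hφ : Primrec φ) (hf : Primrec₂ f) : Primrec fun a => (o a).elim (φ a) (f a) :=
  (Primrec.option_casesOn ho hφ hf).of_eq fun a => by cases o a <;> rfl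

section

variable {own : ℕ → Option M} (hown : Primrec own)
include hown

theorem primrec_boxOf : Primrec₂ (boxOf own) :=
  primrec_elim (hown.comp Primrec.fst) (Primrec.const top)
    (primrec_box.comp Primrec.snd (Primrec.snd.comp Primrec.fst))

theorem primrec_clause : Primrec (clause own) := by
  have tag_eq (t : ℕ) : PrimrecPred fun a => tag a = t :=
    Primrec.eq.comp primrec_tag (Primrec.const t)
  exact Primrec.ite (tag_eq 0) (Primrec.const top) <|
    Primrec.ite (tag_eq 1)
      (primrec_iff.comp primrec_atom (primrec_neg.comp (primrec_atom.comp primrec_body))) <|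
    Primrec.ite (tag_eq 2)
      (primrec_iff.comp primrec_atom
        (primrec_and.comp (primrec_atom.comp primrec_left) (primrec_atom.comp primrec_right))) <|
    primrec_elim (hown.comp primrec_left) (Primrec.const top)
      (primrec_iff.comp (primrec_atom.comp Primrec.fst)
        (primrec_box.comp Primrec.snd (primrec_atom.comp (primrec_right.comp Primrec.fst))))

theorem primrec_clauses : Primrec (clauses own) :=
  primrec_conj ((primrec_clause hown).comp Primrec.snd) Primrec.id

theorem primrec_guard (e : M) : Primrec₂ (guard e own) := by
  have level : Primrec fun x : (ℕ × ℕ) × ℕ × PF M => x.2.1 + 1 :=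
    Primrec.succ.comp (Primrec.fst.comp Primrec.snd)
  have hboxes : Primrec fun x : (ℕ × ℕ) × ℕ × PF M =>
      conj (fun o => boxOf own o x.2.2) (x.2.1 + 1) :=
    primrec_conj ((primrec_boxOf hown).comp Primrec.snd
      (Primrec.snd.comp (Primrec.snd.comp Primrec.fst))) level
  have hstep : Primrec₂ fun (a : ℕ × ℕ) (x : ℕ × PF M) =>
      box e (and (and (admissible e a.1 (x.1 + 1)) (clauses own (x.1 + 1)))
        (conj (fun o => boxOf own o x.2) (x.1 + 1))) :=
    primrec_box.comp (Primrec.const e) (primrec_and.comp (primrec_and.comp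
      ((primrec_admissible e).comp (Primrec.fst.comp Primrec.fst) level)
      ((primrec_clauses hown).comp level)) hboxes)
  refine (Primrec.nat_rec' Primrec.snd (Primrec.const top) hstep).of_eq fun ⟨D, k⟩ => ?_
  dsimp only
  induction k with
  | zero => rfl
  | succ k ih => rw [guard, ← ih]

end

end PF

end PrimrecFormulas

section Decidability

open PF

section

variable {M : Type} [Primcodable M] [Inhabited M] {L : Set (PF M)}

theorem decidableP_iff :
    DecidableP Encodable.encode L ↔ ComputablePred fun φ => φ ∈ L := by
  constructor
  · refine fun h => (computablePred_comp h Computable.encode).of_eq fun φ => ⟨?_, fun hφ => ?_⟩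
    · rintro ⟨ψ, hψ, h⟩
      rwa [← Encodable.encode_injective (α := PF M) h]
    · exact ⟨φ, hφ, rfl⟩
  · refine fun h => (computablePred_and (primrecPred_encode_form_eq (M := M)).computablePred
      (computablePred_comp h primrec_form.to_comp)).of_eq fun n => ⟨?_, ?_⟩
    · exact fun ⟨hn, hmem⟩ => ⟨_, hmem, hn⟩
    · rintro ⟨φ, hφ, rfl⟩
      simpa only [form_encode, true_and] using hφ

theorem globallyDecidableP_iff :
    GloballyDecidableP Encodable.encode L ↔
      ComputablePred fun x : PF M × PF M => PGlobal L x.1 x.2 := by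
  constructor
  · have hcodes : Primrec fun x : PF M × PF M => (Encodable.encode x.1, Encodable.encode x.2) :=
      (Primrec.encode.comp Primrec.fst).pair (Primrec.encode.comp Primrec.snd)
    refine fun h => (computablePred_comp h hcodes.to_comp).of_eq fun x => ⟨?_, fun hx => ?_⟩
    · rintro ⟨φ, ψ, hφψ, hφ, hψ⟩
      rwa [← Encodable.encode_injective (α := PF M) hφ,
        ← Encodable.encode_injective (α := PF M) hψ]
    · exact ⟨_, _, hx, rfl, rfl⟩
  · have hforms : Primrec fun p : ℕ × ℕ => ((form p.1, form p.2) : PF M × PF M) :=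
      (primrec_form.comp Primrec.fst).pair (primrec_form.comp Primrec.snd)
    have hcode := primrecPred_encode_form_eq (M := M)
    refine fun h => (computablePred_and
      ((hcode.comp Primrec.fst).and (hcode.comp Primrec.snd)).computablePred
      (computablePred_comp h hforms.to_comp)).of_eq fun p => ⟨?_, ?_⟩
    · exact fun ⟨⟨h1, h2⟩, h⟩ => ⟨_, _, h, h1, h2⟩
    · obtain ⟨_, _⟩ := p
      rintro ⟨φ, ψ, h, rfl, rfl⟩
      simpa only [form_encode, true_and] using h

variable {e : M} {own : ℕ → Option M}

theorem computablePred_locallyConsistent (hown : Primrec own)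
    (hL : ComputablePred fun φ => φ ∈ L) :
    ComputablePred fun x : ℕ × ℕ => LocallyConsistent e own L x.1 x.2 := by
  have hD : Primrec fun x : ((ℕ × ℕ) × ℕ) × ℕ => x.1.1.1 :=
    Primrec.fst.comp (Primrec.fst.comp Primrec.fst)
  have hk : Primrec fun x : ((ℕ × ℕ) × ℕ) × ℕ => x.1.2 := Primrec.snd.comp Primrec.fst
  have hformula : Primrec fun x : ((ℕ × ℕ) × ℕ) × ℕ =>
      neg (and (paletteFormula e x.1.2 x.2) (guard e own x.1.1.1 x.1.2)) :=
    primrec_neg.comp (primrec_and.comp ((primrec_paletteFormula e).comp hk Primrec.snd)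
      ((primrec_guard hown e).comp hD hk))
  have hlevel : ComputablePred fun x : (ℕ × ℕ) × ℕ =>
      ∀ C < 2 ^ 2 ^ x.2, x.1.1.testBit (Nat.pair x.2 C) = true →
        neg (and (paletteFormula e x.2 C) (guard e own x.1.1 x.2)) ∉ L :=
    computablePred_forall_lt (primrec_two_pow.comp (primrec_two_pow.comp Primrec.snd))
      (computablePred_imp (computablePred_testBit hD (Primrec₂.natPair.comp hk Primrec.snd))
        (computablePred_comp hL hformula.to_comp).not)
  refine (computablePred_forall_lt (Primrec.succ.comp Primrec.snd) hlevel).of_eq fun x => ?_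
  simp only [LocallyConsistent, Nat.succ_eq_add_one, Nat.lt_succ_iff]

theorem computablePred_globallyConsistent (hown : Primrec own)
    (hL : ComputablePred fun x : PF M × PF M => PGlobal L x.1 x.2) :
    ComputablePred fun x : ℕ × ℕ => GloballyConsistent e own L x.1 x.2 := by
  have hD : Primrec fun x : (ℕ × ℕ) × ℕ => x.1.1 := Primrec.fst.comp Primrec.fst
  have hn : Primrec fun x : (ℕ × ℕ) × ℕ => x.1.2 := Primrec.snd.comp Primrec.fst
  have hformulas : Primrec fun x : (ℕ × ℕ) × ℕ =>
      (and (admissible e x.1.1 x.1.2) (clauses own x.1.2), neg (paletteFormula e x.1.2 x.2)) :=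
    (primrec_and.comp ((primrec_admissible e).comp hD hn) ((primrec_clauses hown).comp hn)).pair
      (primrec_neg.comp ((primrec_paletteFormula e).comp hn Primrec.snd))
  exact computablePred_forall_lt (primrec_two_pow.comp (primrec_two_pow.comp Primrec.snd))
    (computablePred_imp (computablePred_testBit hD (Primrec₂.natPair.comp hn Primrec.snd))
      (computablePred_comp hL hformulas.to_comp).not)

end

theorem primrec_bitBound : Primrec bitBound :=
  Primrec₂.natPair.comp Primrec.id (primrec_two_pow.comp primrec_two_pow)

theorem Occurs.lt {D k T : ℕ} (h : Occurs D k T) : T < 2 ^ k := by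
  obtain ⟨_, -, -, hT, -⟩ := h
  exact hT

theorem computablePred_occurs :
    ComputablePred fun x : (ℕ × ℕ) × ℕ => Occurs x.1.1 x.1.2 x.2 := by
  have hD : Primrec fun x : ((ℕ × ℕ) × ℕ) × ℕ => x.1.1.1 :=
    Primrec.fst.comp (Primrec.fst.comp Primrec.fst)
  have hk : Primrec fun x : ((ℕ × ℕ) × ℕ) × ℕ => x.1.1.2 :=
    Primrec.snd.comp (Primrec.fst.comp Primrec.fst)
  have hT : Primrec fun x : ((ℕ × ℕ) × ℕ) × ℕ => x.1.2 := Primrec.snd.comp Primrec.fst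
  exact computablePred_exists_lt
    (primrec_two_pow.comp (primrec_two_pow.comp (Primrec.snd.comp Primrec.fst)))
    (computablePred_and (computablePred_testBit hD (Primrec₂.natPair.comp hk Primrec.snd))
      (computablePred_and
        (Primrec.nat_lt.comp hT (primrec_two_pow.comp hk)).computablePred
        (computablePred_testBit Primrec.snd hT)))

theorem computablePred_exists_occurs :
    ComputablePred fun x : (ℕ × ℕ) × ℕ => ∃ T, Occurs x.1.1 x.1.2 T ∧ ¬ T.testBit x.2 = true := by
  have hoccurs := computablePred_comp computablePred_occurs
    ((Primrec.fst.comp (Primrec.fst (α := (ℕ × ℕ) × ℕ))).pair Primrec.snd).to_comp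
  have htestBit := computablePred_testBit (Primrec.snd (α := (ℕ × ℕ) × ℕ) (β := ℕ))
    (Primrec.snd.comp Primrec.fst)
  refine (computablePred_exists_lt (primrec_two_pow.comp (Primrec.snd.comp Primrec.fst))
    (computablePred_and hoccurs htestBit.not)).of_eq fun x => ?_
  exact ⟨fun ⟨T, _, hT⟩ => ⟨T, hT⟩, fun ⟨T, hT⟩ => ⟨T, hT.1.lt, hT⟩⟩

theorem computablePred_forall_occurs :
    ComputablePred fun x : (ℕ × ℕ) × ℕ => ∀ T, Occurs x.1.1 x.1.2 T → T.testBit x.2 = true :=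
  computablePred_exists_occurs.not.of_eq fun _ => by push Not; rfl

variable {M1 M2 : Type} [Primcodable M1] [Primcodable M2]

theorem primrec_restrictLeft :
    Primrec (restrictLeft : Option (M1 ⊕ M2) → Option (Option M1)) :=
  (Primrec.option_casesOn Primrec.id (Primrec.const (some none))
    (Primrec.sumCasesOn Primrec.snd
      (Primrec.option_some.comp (Primrec.option_some.comp Primrec.snd)).to₂
      (Primrec.const none).to₂).to₂).of_eq fun m => by
    obtain _ | _ | _ := m <;> rfl

theorem primrec_restrictRight :
    Primrec (restrictRight : Option (M1 ⊕ M2) → Option (Option M2)) :=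
  (Primrec.option_casesOn Primrec.id (Primrec.const (some none))
    (Primrec.sumCasesOn Primrec.snd (Primrec.const none).to₂
      (Primrec.option_some.comp (Primrec.option_some.comp Primrec.snd)).to₂).to₂).of_eq fun m => by
    obtain _ | _ | _ := m <;> rfl

theorem primrec_ownLeft : Primrec (ownLeft M1 M2) := primrec_restrictLeft.comp primrec_operator

theorem primrec_ownRight : Primrec (ownRight M1 M2) := primrec_restrictRight.comp primrec_operator

variable {L1 : Set (PF (Option M1))} {L2 : Set (PF (Option M2))}

theorem computablePred_localWitness (hL1 : ComputablePred fun φ => φ ∈ L1)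
    (hL2 : ComputablePred fun φ => φ ∈ L2) :
    ComputablePred fun x : ℕ × ℕ => LocalWitness L1 L2 x.1 x.2 := by
  have hlevel : Primrec fun x : ℕ × ℕ => (x.2, x.1 + 1) :=
    Primrec.snd.pair (Primrec.succ.comp Primrec.fst)
  have htestBit := computablePred_testBit (Primrec.snd (α := ℕ)) (Primrec.const (Nat.pair 0 1))
  have hleft := computablePred_comp
    (computablePred_locallyConsistent (e := none) (primrec_ownLeft (M2 := M2)) hL1) hlevel.to_comp
  have hright := computablePred_comp
    (computablePred_locallyConsistent (e := none) (primrec_ownRight (M1 := M1)) hL2) hlevel.to_comp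
  have hoccurs := computablePred_comp computablePred_exists_occurs
    (hlevel.pair Primrec.fst).to_comp
  refine (computablePred_and htestBit (computablePred_and hleft
    (computablePred_and hright hoccurs))).of_eq fun x => ?_
  exact ⟨fun ⟨h, h1, h2, hT⟩ => ⟨h, h1, h2, hT⟩, fun ⟨h, h1, h2, hT⟩ => ⟨h, h1, h2, hT⟩⟩

theorem computablePred_globalWitness
    (hL1 : ComputablePred fun x : PF (Option M1) × PF (Option M1) => PGlobal L1 x.1 x.2)
    (hL2 : ComputablePred fun x : PF (Option M2) × PF (Option M2) => PGlobal L2 x.1 x.2) :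
    ComputablePred fun x : ((ℕ × ℕ) × ℕ) × ℕ =>
      GlobalWitness L1 L2 x.1.1.1 x.1.1.2 x.1.2 x.2 := by
  have hcodes : Primrec fun x : ((ℕ × ℕ) × ℕ) × ℕ => x.1.1 := Primrec.fst.comp Primrec.fst
  have hlevel : Primrec fun x : ((ℕ × ℕ) × ℕ) × ℕ => (x.2, x.1.2) :=
    Primrec.snd.pair (Primrec.snd.comp Primrec.fst)
  have hleft := computablePred_comp
    (computablePred_globallyConsistent (e := none) (primrec_ownLeft (M2 := M2)) hL1) hlevel.to_comp
  have hright := computablePred_comp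
    (computablePred_globallyConsistent (e := none) (primrec_ownRight (M1 := M1)) hL2) hlevel.to_comp
  have hforall := computablePred_comp computablePred_forall_occurs
    (hlevel.pair (Primrec.fst.comp hcodes)).to_comp
  have hexists := computablePred_comp computablePred_exists_occurs
    (hlevel.pair (Primrec.snd.comp hcodes)).to_comp
  refine (computablePred_and hleft (computablePred_and hright
    (computablePred_and hforall hexists))).of_eq fun x => ?_
  exact ⟨fun ⟨h1, h2, h, hT⟩ => ⟨h1, h2, h, hT⟩, fun ⟨h1, h2, h, hT⟩ => ⟨h1, h2, h, hT⟩⟩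

variable (hS1 : ContainsS5 L1 none) (hS2 : ContainsS5 L2 none)
include hS1 hS2

theorem decidableP_fusionE (hA1 : AdmitsEHomog none L1) (hA2 : AdmitsEHomog none L2)
    (hL1 : DecidableP Encodable.encode L1) (hL2 : DecidableP Encodable.encode L2) :
    DecidableP Encodable.encode (fusionE L1 L2) := by
  have hwitness := computablePred_localWitness (decidableP_iff.1 hL1) (decidableP_iff.1 hL2)
  have hsearch : ComputablePred fun N => ∃ D < 2 ^ bitBound (N + 1), LocalWitness L1 L2 N D :=
    computablePred_exists_lt (primrec_two_pow.comp (primrec_bitBound.comp Primrec.succ)) hwitness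
  refine decidableP_iff.2 ((computablePred_comp hsearch.not Computable.encode).of_eq fun φ => ?_)
  rw [← form_mem_fusionE_iff hS1 hS2 hA1 hA2]
  exact iff_of_eq (congrArg (· ∈ fusionE L1 L2) (form_encode φ))

theorem globallyDecidableP_fusionE (hA1 : AdmitsEHomogGlobal none L1)
    (hA2 : AdmitsEHomogGlobal none L2) (hL1 : GloballyDecidableP Encodable.encode L1)
    (hL2 : GloballyDecidableP Encodable.encode L2) :
    GloballyDecidableP Encodable.encode (fusionE L1 L2) := by
  have hwitness := computablePred_globalWitness
    (globallyDecidableP_iff.1 hL1) (globallyDecidableP_iff.1 hL2)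
  have hlevel : Primrec fun p : ℕ × ℕ => p.1 + p.2 + 1 := Primrec.succ.comp Primrec.nat_add
  have hsearch : ComputablePred fun p : ℕ × ℕ => ∃ D < 2 ^ bitBound (p.1 + p.2 + 1),
      GlobalWitness L1 L2 p.1 p.2 (p.1 + p.2 + 1) D :=
    computablePred_exists_lt (primrec_two_pow.comp (primrec_bitBound.comp hlevel))
      (computablePred_comp hwitness
        (((Primrec.id.pair hlevel).comp Primrec.fst).pair Primrec.snd).to_comp)
  have hcodes : Primrec fun x : PF (Option (M1 ⊕ M2)) × PF (Option (M1 ⊕ M2)) =>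
      (Encodable.encode x.1, Encodable.encode x.2) :=
    (Primrec.encode.comp Primrec.fst).pair (Primrec.encode.comp Primrec.snd)
  refine globallyDecidableP_iff.2
    ((computablePred_comp hsearch.not hcodes.to_comp).of_eq fun x => ?_)
  rw [← pGlobal_fusionE_form_iff hS1 hS2 hA1 hA2 (by omega) (by omega)]
  exact iff_of_eq (congrArg₂ (PGlobal (fusionE L1 L2)) (form_encode x.1) (form_encode x.2))

end Decidability

theorem fusionE_transfer_general {M1 M2 : Type} [Primcodable M1] [Primcodable M2]
    (L1 : Set (PF (Option M1))) (L2 : Set (PF (Option M2)))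
    (hS1 : ContainsS5 L1 none) (hS2 : ContainsS5 L2 none) :
    (AdmitsEHomog none L1 → AdmitsEHomog none L2 →
      KComplete (fusionE L1 L2)) ∧
    (AdmitsEHomog none L1 → AdmitsEHomog none L2 →
      DecidableP Encodable.encode L1 → DecidableP Encodable.encode L2 →
      DecidableP Encodable.encode (fusionE L1 L2)) ∧
    (AdmitsEHomogGlobal none L1 → AdmitsEHomogGlobal none L2 →
      GloballyKComplete (fusionE L1 L2)) ∧
    (AdmitsEHomogGlobal none L1 → AdmitsEHomogGlobal none L2 →
      GloballyDecidableP Encodable.encode L1 → GloballyDecidableP Encodable.encode L2 →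
      GloballyDecidableP Encodable.encode (fusionE L1 L2)) :=
  ⟨kComplete_fusionE hS1 hS2, decidableP_fusionE hS1 hS2, globallyKComplete_fusionE hS1 hS2,
    globallyDecidableP_fusionE hS1 hS2⟩

theorem eOU_eq_encode : eOU = Encodable.encode := by
  funext m
  obtain _ | _ := m <;> rfl

theorem eOC_eq_encode : eOC = Encodable.encode := by
  funext m
  obtain _ | _ | _ := m <;> rfl

/-- Transfer of (global) Kripke completeness and (global)
decidability under fusions of bimodal logics sharing an S5 operator `□_E`
(designated by `none`) and admitting `E`-homogeneous models. -/
theorem fusionE_transfer (L1 L2 : Set (PF (Option Unit)))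
    (h1 : IsPLogic L1) (h2 : IsPLogic L2)
    (hS1 : ContainsS5 L1 none) (hS2 : ContainsS5 L2 none) :
    (AdmitsEHomog none L1 → AdmitsEHomog none L2 →
      KComplete (fusionE L1 L2)) ∧
    (AdmitsEHomog none L1 → AdmitsEHomog none L2 →
      DecidableP eOU L1 → DecidableP eOU L2 → DecidableP eOC (fusionE L1 L2)) ∧
    (AdmitsEHomogGlobal none L1 → AdmitsEHomogGlobal none L2 →
      GloballyKComplete (fusionE L1 L2)) ∧
    (AdmitsEHomogGlobal none L1 → AdmitsEHomogGlobal none L2 →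
      GloballyDecidableP eOU L1 → GloballyDecidableP eOU L2 →
      GloballyDecidableP eOC (fusionE L1 L2)) := by
  rw [eOU_eq_encode, eOC_eq_encode]
  exact fusionE_transfer_general L1 L2 hS1 hS2

end PropML
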